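/- arXiv:math/0410282 — 3 statements merged into one kernel-verified Lean document; each statement's English description precedes it below -/
import Mathlib

section
/- There exist a constant C > 0 and infinitely many positive integers n for which there is a balanced Boolean function f : {0,1}^n → {0,1} (i.e., Pr[f(x)=1] = 1/2 for x uniform on {0,1}^n) together with a randomized decision-tree algorithm that on every input outputs f(x) with probability 1, and whose revealment satisfies δ = max_i δ_i ≤ C · n^{-1/2} · √(log n). -/
/-- A deterministic decision tree on `n` bits: a leaf outputs a Boolean value, an
internal node queries a bit and branches on its value. -/
inductive DTree (n : ℕ) : Type
  | leaf : Bool → DTree n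
  | node : Fin n → DTree n → DTree n → DTree n

namespace DTree

/-- The output of a decision tree on input `x`. -/
def eval {n : ℕ} : DTree n → (Fin n → Bool) → Bool
  | .leaf b, _ => b
  | .node i t0 t1, x => if x i then t1.eval x else t0.eval x

/-- Whether the decision tree reads bit `j` when run on input `x`. -/
def readsBit {n : ℕ} : DTree n → (Fin n → Bool) → Fin n → Bool
  | .leaf _, _, _ => false
  | .node i t0 t1, x, j =>
      (i == j) || (if x i then t1.readsBit x j else t0.readsBit x j)

end DTree

/-- A randomized decision-tree algorithm: a (finitely supported) probability
distribution over deterministic decision trees. -/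
structure RandAlg (n : ℕ) where
  m : ℕ
  tree : Fin m → DTree n
  w : Fin m → ℝ
  w_nonneg : ∀ r, 0 ≤ w r
  w_sum : ∑ r, w r = 1

/-- `readProb A i` is the probability δ_i that bit `i` is read, over a uniformly
random input and the internal randomness of the algorithm. -/
noncomputable def readProb {n : ℕ} (A : RandAlg n) (i : Fin n) : ℝ :=
  (∑ r, ∑ x : Fin n → Bool, if (A.tree r).readsBit x i then A.w r else 0) / 2 ^ n

/-- The probability that the algorithm's output differs from `f`, over a uniformly
random input and the internal randomness of the algorithm. -/
noncomputable def errProb {n : ℕ} (A : RandAlg n) (f : (Fin n → Bool) → Bool) : ℝ :=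
  (∑ r, ∑ x : Fin n → Bool, if (A.tree r).eval x ≠ f x then A.w r else 0) / 2 ^ n

/-- A Boolean function is balanced if it takes the value `true` on exactly half
of all inputs. -/
def balanced {n : ℕ} (f : (Fin n → Bool) → Bool) : Prop :=
  2 * Nat.card {x : Fin n → Bool // f x = true} = 2 ^ n

/-- A Boolean function is monotone if it is order preserving coordinatewise. -/
def monotoneBF {n : ℕ} (f : (Fin n → Bool) → Bool) : Prop :=
  ∀ x y : Fin n → Bool, (∀ i, x i ≤ y i) → f x ≤ f y

/-- The ±1 encoding of a Boolean value. -/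
noncomputable def pm (b : Bool) : ℝ := if b then 1 else -1

/-- The variance of the ±1-valued function corresponding to `f`, for a uniformly
random input. -/
noncomputable def pmVar {n : ℕ} (f : (Fin n → Bool) → Bool) : ℝ :=
  (∑ x : Fin n → Bool, pm (f x) ^ 2) / 2 ^ n
    - ((∑ x : Fin n → Bool, pm (f x)) / 2 ^ n) ^ 2

/-!
The input labels the nodes of `ZMod T × V`, where `V` is the vertex set of an expander of bounded
degree with `|V| = 4 ^ r` and `T = 4 ^ r * r`. A label consists of four bits that prescribe a step
of a lazy walk from the layer `t` to the layer `t + 1`, and of one output bit. The function `f` is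
the output bit of a canonically chosen node of the layer `0` that lies on a cycle of this walk; it
is balanced because the steps ignore the output bits.

Every cycle meets every layer, so `f` can be computed by following the walks from all nodes of any
one layer once around; the algorithm starts from a uniformly random layer. A node at distance `s`
from the starting layer is read only if one of the walks reaches it, and since the backward process
from a single node is a critical branching process with variance bounded below by the expansion,
this has probability `O(1 / s + 1 / |V|)`. Averaging over `s < T` gives
`O(log T / T + 1 / |V|) = O(4 ^ (-r))`, while `n = 5 * |V| * T` makes `√(log n) / √n` of the order
`4 ^ (-r)`.

The expander acts on `(F₂^r)²` by shears and translations. Its spectral gap is a ping-pong argument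
on the Fourier side: the dual shears move a frequency mass outside of the top coordinates onto
disjoint sets, and the translations detect the top coordinates.
-/

namespace CoalescingWalk

section Average

open Finset
open scoped BigOperators

variable {ι α M : Type*} [Fintype ι] [DecidableEq ι] [Fintype α]

lemma expect_expect_update [Nonempty α] [AddCommMonoid M] [Module ℚ≥0 M]
    (F : (ι → α) → M) (i : ι) : 𝔼 x, 𝔼 a, F (Function.update x i a) = 𝔼 x, F x := by
  let swap : (ι → α) × α → (ι → α) × α := fun p ↦ (Function.update p.1 i p.2, p.1 i)
  have swap_swap : Function.Involutive swap := fun p ↦ by simp [swap]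
  calc 𝔼 x, 𝔼 a, F (Function.update x i a)
      = 𝔼 p : (ι → α) × α, F (swap p).1 := (expect_product' univ univ _).symm
    _ = 𝔼 p : (ι → α) × α, F p.1 :=
        Fintype.expect_bijective swap swap_swap.bijective _ _ fun _ ↦ rfl
    _ = 𝔼 x, 𝔼 _a : α, F x := expect_product' univ univ fun x _ ↦ F x
    _ = 𝔼 x, F x := by simp only [Fintype.expect_const]

lemma expect_comp_eval [Nonempty α] [AddCommMonoid M] [Module ℚ≥0 M] (F : α → M) (i : ι) :
    𝔼 x : ι → α, F (x i) = 𝔼 a, F a := by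
  rw [← expect_expect_update _ i]
  simp only [Function.update_self, Fintype.expect_const]

lemma expect_prod_eval [Semifield M] [CharZero M] (F : ι → α → M) :
    𝔼 x : ι → α, ∏ i, F i (x i) = ∏ i, 𝔼 a, F i a := by
  simp only [Fintype.expect_eq_sum_div_card, prod_div_distrib, prod_univ_sum,
    Fintype.piFinset_univ, prod_const, card_univ, Fintype.card_fun, Nat.cast_pow]

end Average

/-! ### The Walsh transform -/

section Walsh

open Finset

/-- The nontrivial character of `ZMod 2`, with values `±1`. -/
noncomputable def signChar : AddChar (ZMod 2) ℝ :=
  AddChar.zmodChar 2 (ζ := -1) (by norm_num)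

lemma signChar_of_ne_zero {a : ZMod 2} (ha : a ≠ 0) : signChar a = -1 := by
  obtain rfl : a = 1 := Fin.eq_one_of_ne_zero a ha
  simp [signChar, AddChar.zmodChar_apply, ZMod.val_one]

variable {V W : Type*} [AddCommGroup V] [Module (ZMod 2) V]
  [AddCommGroup W] [Module (ZMod 2) W] {B : V →ₗ[ZMod 2] W →ₗ[ZMod 2] ZMod 2}

lemma sum_signChar [Fintype W] [DecidableEq V] (hB : B.SeparatingLeft) (x : V) :
    ∑ z, signChar (B x z) = if x = 0 then (Fintype.card W : ℝ) else 0 := by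
  have trivial_iff : signChar.compAddMonoidHom (B x).toAddMonoidHom = 0 ↔ x = 0 := by
    refine ⟨fun h ↦ hB x fun z ↦ ?_, ?_⟩
    · by_contra hz
      have := DFunLike.congr_fun h z
      norm_num [signChar_of_ne_zero hz] at this
    · rintro rfl
      ext z
      simp
  classical
  rw [← if_congr trivial_iff rfl rfl]
  exact AddChar.sum_eq_ite (signChar.compAddMonoidHom (B x).toAddMonoidHom)

variable [Fintype V]

variable (B) in
/-- The Walsh (Fourier) transform of `f` relative to the pairing `B`, without normalization. -/
noncomputable def walsh (f : V → ℝ) (z : W) : ℝ := ∑ x, signChar (B x z) * f x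

lemma walsh_sub (f g : V → ℝ) (z : W) :
    walsh B (fun x ↦ f x - g x) z = walsh B f z - walsh B g z := by
  simp only [walsh, mul_sub, sum_sub_distrib]

lemma walsh_comp_equiv (e : V ≃ V) {d : W → W} (hd : ∀ x z, B (e.symm x) z = B x (d z))
    (f : V → ℝ) (z : W) : walsh B (fun x ↦ f (e x)) z = walsh B f (d z) := by
  simp only [walsh, ← hd]
  exact Fintype.sum_equiv e _ _ fun x ↦ by rw [e.symm_apply_apply]

lemma walsh_comp_add_right (f : V → ℝ) (v : V) (z : W) :
    walsh B (fun x ↦ f (x + v)) z = signChar (B v z) * walsh B f z := by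
  simp only [walsh, mul_sum]
  refine Fintype.sum_equiv (Equiv.addRight v) _ _ fun x ↦ ?_
  rw [← mul_assoc, ← AddChar.map_add_eq_mul, ← LinearMap.add_apply, ← map_add,
    Equiv.coe_addRight, add_left_comm, ZModModule.add_self, add_zero]

variable [Fintype W]

lemma sum_walsh_sq (hB : B.SeparatingLeft) (f : V → ℝ) :
    ∑ z, walsh B f z ^ 2 = Fintype.card W * ∑ x, f x ^ 2 := by
  classical
  calc ∑ z, walsh B f z ^ 2
      = ∑ z, ∑ x, ∑ y, signChar (B (x + y) z) * (f x * f y) := by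
        simp only [sq, walsh, sum_mul_sum, map_add, LinearMap.add_apply, AddChar.map_add_eq_mul,
          mul_mul_mul_comm]
    _ = ∑ x, ∑ y, (∑ z, signChar (B (x + y) z)) * (f x * f y) := by
        simp only [sum_mul]
        rw [sum_comm]
        exact sum_congr rfl fun x _ ↦ sum_comm
    _ = Fintype.card W * ∑ x, f x ^ 2 := by
        simp only [sum_signChar hB, ← ZModModule.sub_eq_add, sub_eq_zero, ite_mul, zero_mul,
          sum_ite_eq, mem_univ, if_true, mul_sum, sq]

lemma sum_walsh_comp_sub_sq (hB : B.SeparatingLeft) (e : V ≃ V) {d : W → W}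
    (hd : ∀ x z, B (e.symm x) z = B x (d z)) (f : V → ℝ) :
    ∑ z, (walsh B f (d z) - walsh B f z) ^ 2 = Fintype.card W * ∑ x, (f (e x) - f x) ^ 2 := by
  simp only [← walsh_comp_equiv e hd, ← walsh_sub, sum_walsh_sq hB]

lemma sum_walsh_sq_filter_ne_zero (hB : B.SeparatingLeft) (v : V) (f : V → ℝ) :
    4 * ∑ z with B v z ≠ 0, walsh B f z ^ 2 = Fintype.card W * ∑ x, (f (x + v) - f x) ^ 2 := by
  rw [← sum_walsh_sq hB, sum_filter, mul_sum]
  refine sum_congr rfl fun z _ ↦ ?_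
  rw [walsh_sub, walsh_comp_add_right]
  split_ifs with hz
  · rw [signChar_of_ne_zero hz]
    ring
  · rw [not_ne_iff.mp hz, AddChar.map_zero_eq_one]
    ring

end Walsh

/-! ### An expander of bounded degree -/

section Expander

open Finset
open scoped Matrix Function

lemma sum_sq_le_of_pairwise_disjoint_map {ι X : Type*} [Fintype ι] [Fintype X] (F : X → ℝ)
    (S : ι → Finset X) (e : ι → X ≃ X)
    (disjoint : Pairwise (Disjoint on fun i ↦ (S i).map (e i).toEmbedding)) :
    ∑ i, ∑ z ∈ S i, F z ^ 2 ≤ 3 / 2 * ∑ z, F z ^ 2 + 3 * ∑ i, ∑ z, (F (e i z) - F z) ^ 2 := by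
  have images_le : ∑ i, ∑ z ∈ S i, F (e i z) ^ 2 ≤ ∑ z, F z ^ 2 := by
    have mapped (i : ι) : ∑ z ∈ S i, F (e i z) ^ 2
        = ∑ z ∈ (S i).map (e i).toEmbedding, F z ^ 2 := by
      rw [sum_map]
      rfl
    simp only [mapped]
    classical
    rw [← sum_biUnion fun i _ j _ hij ↦ disjoint hij]
    exact sum_le_univ_sum_of_nonneg fun z ↦ sq_nonneg (F z)
  have pointwise (i : ι) (z : X) :
      F z ^ 2 ≤ 3 / 2 * F (e i z) ^ 2 + 3 * (F (e i z) - F z) ^ 2 := by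
    nlinarith [sq_nonneg (2 * F z - 3 * F (e i z))]
  calc ∑ i, ∑ z ∈ S i, F z ^ 2
      ≤ ∑ i, ∑ z ∈ S i, (3 / 2 * F (e i z) ^ 2 + 3 * (F (e i z) - F z) ^ 2) :=
        sum_le_sum fun i _ ↦ sum_le_sum fun z _ ↦ pointwise i z
    _ = 3 / 2 * ∑ i, ∑ z ∈ S i, F (e i z) ^ 2
          + 3 * ∑ i, ∑ z ∈ S i, (F (e i z) - F z) ^ 2 := by
        simp only [sum_add_distrib, mul_sum]
    _ ≤ 3 / 2 * ∑ z, F z ^ 2 + 3 * ∑ i, ∑ z, (F (e i z) - F z) ^ 2 := by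
        gcongr with i
        exact subset_univ _

/-- The pairing `∑ b, ⟨x b, z b⟩` on pairs of binary vectors; a pair is encoded as a function
on `Bool`. -/
def pairing (n : Type*) [Fintype n] :
    (Bool → n → ZMod 2) →ₗ[ZMod 2] (Bool → n → ZMod 2) →ₗ[ZMod 2] ZMod 2 :=
  LinearMap.mk₂ (ZMod 2) (fun x z ↦ ∑ b, x b ⬝ᵥ z b)
    (fun x y z ↦ by simp only [Pi.add_apply, add_dotProduct, sum_add_distrib])
    (fun a x z ↦ by simp only [Pi.smul_apply, smul_dotProduct, smul_sum])
    (fun x y z ↦ by simp only [Pi.add_apply, dotProduct_add, sum_add_distrib])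
    (fun a x z ↦ by simp only [Pi.smul_apply, dotProduct_smul, smul_sum])

section Shear

variable {n : Type*} [Fintype n]

lemma pairing_apply (x z : Bool → n → ZMod 2) : pairing n x z = ∑ b, x b ⬝ᵥ z b := rfl

lemma pairing_single_left [DecidableEq n] (b : Bool) (i : n) (z : Bool → n → ZMod 2) :
    pairing n (Pi.single b (Pi.single i 1)) z = z b i := by
  rw [pairing_apply, sum_eq_single b (fun c _ hc ↦ by simp [Pi.single_eq_of_ne hc]) (by simp)]
  simp

lemma pairing_single_right [DecidableEq n] (b : Bool) (i : n) (x : Bool → n → ZMod 2) :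
    pairing n x (Pi.single b (Pi.single i 1)) = x b i := by
  rw [← pairing_single_left b i x]
  simp only [pairing_apply, dotProduct_comm]

lemma pairing_separatingLeft : (pairing n).SeparatingLeft := by
  classical
  intro x hx
  ext b i
  rw [← pairing_single_right b i x, hx, Pi.zero_apply, Pi.zero_apply]

/-- The shear of `(F₂ⁿ)²` that adds `A` times the other component to component `b`. -/
def shear (b : Bool) (A : Matrix n n (ZMod 2)) (x : Bool → n → ZMod 2) : Bool → n → ZMod 2 :=
  Function.update x b (x b + A *ᵥ x (!b))

lemma shear_apply_self (b : Bool) (A : Matrix n n (ZMod 2)) (x : Bool → n → ZMod 2) :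
    shear b A x b = x b + A *ᵥ x (!b) := Function.update_self ..

lemma shear_apply_not (b : Bool) (A : Matrix n n (ZMod 2)) (x : Bool → n → ZMod 2) :
    shear b A x (!b) = x (!b) := Function.update_of_ne (Bool.not_ne_self b) ..

lemma shear_involutive (b : Bool) (A : Matrix n n (ZMod 2)) :
    Function.Involutive (shear b A) := fun x ↦ by
  rw [shear, shear_apply_self, shear_apply_not, shear, Function.update_idem, add_assoc,
    ZModModule.add_self, add_zero, Function.update_eq_self]

lemma pairing_shear (b : Bool) (A : Matrix n n (ZMod 2)) (x z : Bool → n → ZMod 2) :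
    pairing n (shear b Aᵀ x) z = pairing n x (shear (!b) A z) := by
  have adjoint : Aᵀ *ᵥ x (!b) ⬝ᵥ z b = x (!b) ⬝ᵥ A *ᵥ z b := by
    rw [Matrix.mulVec_transpose, Matrix.dotProduct_mulVec]
  cases b <;>
    simp_all only [pairing_apply, Fintype.sum_bool, shear, Bool.not_true, Bool.not_false,
      Function.update_self, ne_eq, Bool.true_eq_false, Bool.false_eq_true, not_false_eq_true,
      Function.update_of_ne, add_dotProduct, dotProduct_add] <;>
    ring

end Shear

section Shift

variable {r j : ℕ}

/-- Multiplication by `X ^ j` on polynomials of degree less than `r`, with the overflowing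
coefficients dropped. -/
def shiftMatrix (r j : ℕ) : Matrix (Fin r) (Fin r) (ZMod 2) :=
  Matrix.of fun i l ↦ if (i : ℕ) = l + j then 1 else 0

lemma shiftMatrix_mulVec_apply_of_add {i l : Fin r} (h : (i : ℕ) = l + j) (v : Fin r → ZMod 2) :
    (shiftMatrix r j *ᵥ v) i = v l := by
  have column_iff (k : Fin r) : (i : ℕ) = k + j ↔ k = l := by
    rw [h, Nat.add_right_cancel_iff, Fin.val_inj, eq_comm]
  simp only [Matrix.mulVec, dotProduct, shiftMatrix, Matrix.of_apply, column_iff, ite_mul, one_mul,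
    zero_mul, sum_ite_eq', mem_univ, if_true]

/-- One more than the largest index of a nonzero coordinate (`0` for the zero vector). -/
def effLength (u : Fin r → ZMod 2) : ℕ := ({i | u i ≠ 0} : Finset (Fin r)).sup fun i ↦ i + 1

lemma effLength_le_iff {u : Fin r → ZMod 2} {m : ℕ} :
    effLength u ≤ m ↔ ∀ i : Fin r, m ≤ i → u i = 0 := by
  rw [effLength, Finset.sup_le_iff]
  simp only [mem_filter_univ, Nat.add_one_le_iff]
  exact forall_congr' fun i ↦ by rw [← not_imp_not, not_lt, not_not]

lemma apply_eq_zero_of_effLength_le {u : Fin r → ZMod 2} {i : Fin r} (h : effLength u ≤ i) :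
    u i = 0 := effLength_le_iff.1 le_rfl i h

lemma effLength_eq_zero_iff {u : Fin r → ZMod 2} : effLength u = 0 ↔ u = 0 := by
  rw [← Nat.le_zero, effLength_le_iff, funext_iff]
  simp only [zero_le, forall_const, Pi.zero_apply]

lemma effLength_add_shift {u v : Fin r → ZMod 2} (hj : 0 < j) (huv : effLength u ≤ effLength v)
    (hv : 0 < effLength v) (hr : effLength v + j ≤ r) :
    effLength (u + shiftMatrix r j *ᵥ v) = effLength v + j := by
  refine le_antisymm (effLength_le_iff.2 fun i hi ↦ ?_) (le_of_not_gt fun hlt ↦ ?_)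
  · let l : Fin r := ⟨i - j, by omega⟩
    have hil : (i : ℕ) = l + j := by simp only [l]; omega
    have hui : u i = 0 := apply_eq_zero_of_effLength_le (by omega)
    have hvl : v l = 0 := apply_eq_zero_of_effLength_le (by omega)
    rw [Pi.add_apply, hui, shiftMatrix_mulVec_apply_of_add hil, hvl, add_zero]
  · let l : Fin r := ⟨effLength v - 1, by omega⟩
    let i : Fin r := ⟨l + j, by simp only [l]; omega⟩
    have hui : u i = 0 := apply_eq_zero_of_effLength_le (by simp only [i, l]; omega)
    have hsum : (u + shiftMatrix r j *ᵥ v) i = 0 :=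
      apply_eq_zero_of_effLength_le (by simp only [i, l]; omega)
    have hvl : v l = 0 := by
      rwa [Pi.add_apply, hui, zero_add, shiftMatrix_mulVec_apply_of_add rfl] at hsum
    have : effLength v ≤ effLength v - 1 := effLength_le_iff.2 fun k hk ↦ by
      rcases hk.eq_or_lt with h | h
      · rwa [← show l = k from Fin.ext h]
      · exact apply_eq_zero_of_effLength_le (by omega)
    omega

end Shift

lemma sum_le_sum_sum_of_cover {ι X : Type*} [Fintype ι] [Fintype X] {f : X → ℝ}
    (hf : ∀ x, 0 ≤ f x) (S : ι → Finset X) (cover : ∀ x, f x ≠ 0 → ∃ i, x ∈ S i) :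
    ∑ x, f x ≤ ∑ i, ∑ x ∈ S i, f x := by
  classical
  have indicator (i : ι) : ∑ x ∈ S i, f x = ∑ x, if x ∈ S i then f x else 0 := by
    rw [sum_ite_mem, univ_inter]
  simp only [indicator]
  rw [sum_comm]
  refine sum_le_sum fun x _ ↦ ?_
  have nonneg (i : ι) : 0 ≤ if x ∈ S i then f x else 0 := by
    split_ifs
    exacts [hf x, le_rfl]
  by_cases hx : f x = 0
  · simpa only [hx] using sum_nonneg fun i _ ↦ nonneg i
  · obtain ⟨i, hi⟩ := cover x hx
    calc f x = if x ∈ S i then f x else 0 := (if_pos hi).symm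
      _ ≤ _ := single_le_sum (fun i _ ↦ nonneg i) (mem_univ i)

section Generators

variable {m : ℕ}

variable (m) in
/-- `(F₂^(m+2))²`, the vertex set of the expander. -/
abbrev VectorPair := Bool → Fin (m + 2) → ZMod 2

variable (m) in
/-- The standard basis vector at coordinate `m` or `m + 1` (according to `k`) of component `b`. -/
def topVector (b k : Bool) : VectorPair m :=
  Pi.single b (Pi.single ⟨m + k.toNat, by cases k <;> simp⟩ 1)

variable (m) in
/-- The eight permutations generating the expander: for the label `(isShear, b, k)`, the shear of
component `b` along the transposed shift by `k + 1`, or the translation by `topVector m b k`. -/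
def generator : Bool × Bool × Bool → Equiv.Perm (VectorPair m)
  | (true, b, k) => (shear_involutive b (shiftMatrix (m + 2) (k.toNat + 1))ᵀ).toPerm
  | (false, b, k) => Equiv.addRight (topVector m b k)

/-- The action of the shear generator `(true, b, k)` on the Fourier side. -/
def dualShear (b k : Bool) : Equiv.Perm (VectorPair m) :=
  (shear_involutive (!b) (shiftMatrix (m + 2) (k.toNat + 1))).toPerm

variable (m) in
/-- The frequencies on which the dual shears `dualShear b k` play ping-pong: component `b` is
nonzero, at least as long as the other one, and can be shifted twice without overflow. -/
def dominant (b : Bool) : Finset (VectorPair m) :=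
  {z | effLength (z !b) ≤ effLength (z b) ∧ 0 < effLength (z b) ∧ effLength (z b) ≤ m}

lemma effLength_dualShear {b : Bool} (k : Bool) {z : VectorPair m} (hz : z ∈ dominant m b) :
    effLength (dualShear b k z !b) = effLength (dualShear b k z b) + (k.toNat + 1) := by
  obtain ⟨hle, hpos, hm⟩ := (mem_filter_univ _).1 hz
  have component : dualShear b k z b = z b := by
    have := shear_apply_not (!b) (shiftMatrix (m + 2) (k.toNat + 1)) z
    rwa [Bool.not_not] at this
  have other : dualShear b k z (!b) = z (!b) + shiftMatrix (m + 2) (k.toNat + 1) *ᵥ z b := by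
    have := shear_apply_self (!b) (shiftMatrix (m + 2) (k.toNat + 1)) z
    rwa [Bool.not_not] at this
  rw [component, other]
  exact effLength_add_shift (Nat.succ_pos _) hle hpos (by have := k.toNat_le; omega)

lemma pairwise_disjoint_map_dualShear : Pairwise (Disjoint on fun i : Bool × Bool ↦
    (dominant m i.1).map (dualShear i.1 i.2).toEmbedding) := by
  rintro ⟨b, k⟩ ⟨b', k'⟩ hne
  refine disjoint_left.2 fun w hw hw' ↦ hne ?_
  obtain ⟨z, hz, rfl⟩ := mem_map.1 hw
  obtain ⟨z', hz', heq⟩ := mem_map.1 hw'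
  have h := effLength_dualShear k hz
  have h' := effLength_dualShear k' hz'
  simp only [Equiv.coe_toEmbedding] at heq
  rw [heq] at h'
  cases b <;> cases b' <;> cases k <;> cases k' <;>
    simp only [Bool.not_true, Bool.not_false, Bool.toNat_true, Bool.toNat_false] at h h' ⊢ <;>
    omega

lemma effLength_le_of_topVector {z : VectorPair m} {b : Bool}
    (h : ∀ k, pairing _ (topVector m b k) z = 0) : effLength (z b) ≤ m := by
  refine effLength_le_iff.2 fun i hi ↦ ?_
  simp only [topVector, pairing_single_left] at h
  obtain him | him : (i : ℕ) = m ∨ (i : ℕ) = m + 1 := by omega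
  · exact (congrArg (z b) (Fin.ext him)).trans (h false)
  · exact (congrArg (z b) (Fin.ext him)).trans (h true)

lemma exists_mem_dominant_or_topVector {z : VectorPair m} (hz : z ≠ 0) :
    (∃ b, z ∈ dominant m b) ∨ ∃ b k, pairing _ (topVector m b k) z ≠ 0 := by
  refine or_iff_not_imp_right.2 fun htop ↦ ?_
  push Not at htop
  have length_le (b : Bool) := effLength_le_of_topVector (htop b)
  obtain ⟨c, hc⟩ := Function.ne_iff.1 hz
  have hpos : 0 < effLength (z c) := Nat.pos_of_ne_zero (effLength_eq_zero_iff.not.2 hc)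
  simp only [dominant, mem_filter_univ]
  rcases le_total (effLength (z !c)) (effLength (z c)) with h | h
  · exact ⟨c, h, hpos, length_le c⟩
  · exact ⟨!c, by rwa [Bool.not_not], by omega, length_le _⟩

lemma sum_le_sum_dominant_add_sum_topVector {g : VectorPair m → ℝ} (hg : ∀ z, 0 ≤ g z)
    (hg0 : g 0 = 0) :
    ∑ z, g z ≤ ∑ b, ∑ z ∈ dominant m b, g z
      + ∑ i : Bool × Bool, ∑ z with pairing _ (topVector m i.1 i.2) z ≠ 0, g z := by
  let S : Bool ⊕ Bool × Bool → Finset (VectorPair m) :=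
    Sum.elim (dominant m) fun i ↦ univ.filter fun z ↦ pairing _ (topVector m i.1 i.2) z ≠ 0
  refine (sum_le_sum_sum_of_cover hg S fun z hz ↦ ?_).trans_eq (Fintype.sum_sum_type _)
  have z_ne_zero : z ≠ 0 := fun h ↦ hz (h ▸ hg0)
  rcases exists_mem_dominant_or_topVector z_ne_zero with ⟨b, hb⟩ | ⟨b, k, hbk⟩
  · exact ⟨.inl b, hb⟩
  · exact ⟨.inr (b, k), (mem_filter_univ z).2 hbk⟩

lemma two_mul_sum_walsh_sq_dominant_le (f : VectorPair m → ℝ) :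
    2 * ∑ b, ∑ z ∈ dominant m b, walsh (pairing _) f z ^ 2
      ≤ 3 / 2 * ∑ z, walsh (pairing _) f z ^ 2 + 3 * (Fintype.card (VectorPair m)
        * ∑ i : Bool × Bool, ∑ x, (f (generator m (true, i) x) - f x) ^ 2) := by
  have ping_pong := sum_sq_le_of_pairwise_disjoint_map (walsh (pairing _) f) _ _
    (pairwise_disjoint_map_dualShear (m := m))
  have dual_energy (i : Bool × Bool) :
      ∑ z, (walsh (pairing _) f (dualShear i.1 i.2 z) - walsh (pairing _) f z) ^ 2
        = Fintype.card (VectorPair m) * ∑ x, (f (generator m (true, i) x) - f x) ^ 2 :=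
    sum_walsh_comp_sub_sq pairing_separatingLeft (generator m (true, i))
      (fun x z ↦ pairing_shear i.1 _ x z) f
  simp only [dual_energy, ← mul_sum] at ping_pong
  simpa only [Fintype.sum_prod_type, Fintype.sum_bool, ← two_mul, ← mul_add] using ping_pong

lemma sum_sq_le_sum_generator {f : VectorPair m → ℝ} (hf : ∑ x, f x = 0) :
    ∑ x, f x ^ 2 ≤ 6 * ∑ i, ∑ x, (f (generator m i x) - f x) ^ 2 := by
  let F := walsh (pairing (Fin (m + 2))) f
  let N : ℝ := Fintype.card (VectorPair m)
  let energy (i : Bool × Bool × Bool) : ℝ := ∑ x, (f (generator m i x) - f x) ^ 2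
  have parseval : ∑ z, F z ^ 2 = N * ∑ x, f x ^ 2 := sum_walsh_sq pairing_separatingLeft f
  have shears : 2 * ∑ b, ∑ z ∈ dominant m b, F z ^ 2
      ≤ 3 / 2 * ∑ z, F z ^ 2 + 3 * (N * ∑ i, energy (true, i)) :=
    two_mul_sum_walsh_sq_dominant_le f
  have translations : 4 * ∑ i : Bool × Bool, ∑ z with pairing _ (topVector m i.1 i.2) z ≠ 0, F z ^ 2
      = N * ∑ i, energy (false, i) := by
    rw [mul_sum, mul_sum]
    exact sum_congr rfl fun i _ ↦ sum_walsh_sq_filter_ne_zero pairing_separatingLeft _ f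
  have cover : ∑ z, F z ^ 2 ≤ ∑ b, ∑ z ∈ dominant m b, F z ^ 2
      + ∑ i : Bool × Bool, ∑ z with pairing _ (topVector m i.1 i.2) z ≠ 0, F z ^ 2 :=
    sum_le_sum_dominant_add_sum_topVector (fun z ↦ sq_nonneg (F z)) (by simp [F, walsh, hf])
  have N_pos : 0 < N := Nat.cast_pos.2 Fintype.card_pos
  have translations_nonneg : 0 ≤ N * ∑ i, energy (false, i) :=
    mul_nonneg N_pos.le (sum_nonneg fun i _ ↦ sum_nonneg fun x _ ↦ sq_nonneg _)
  rw [Fintype.sum_prod_type, Fintype.sum_bool]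
  refine le_of_mul_le_mul_left ?_ N_pos
  linarith

end Generators

lemma card_le_sum_card_of_sum_sq_le {ι V : Type*} [Fintype ι] [Fintype V] [DecidableEq V]
    {s : ι → V → V} {K : ℝ}
    (hs : ∀ f : V → ℝ, ∑ x, f x = 0 → ∑ x, f x ^ 2 ≤ K * ∑ i, ∑ x, (f (s i x) - f x) ^ 2)
    {A : Finset V} (hA : 2 * #A ≤ Fintype.card V) :
    (#A : ℝ) ≤ 2 * K * ∑ i, (#{x | ¬(s i x ∈ A ↔ x ∈ A)} : ℝ) := by
  rcases A.eq_empty_or_nonempty with rfl | ⟨x₀, -⟩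
  · simp
  have card_pos : (0 : ℝ) < Fintype.card V := Nat.cast_pos.2 (Fintype.card_pos_iff.2 ⟨x₀⟩)
  let density : ℝ := #A / Fintype.card V
  let f (x : V) : ℝ := (if x ∈ A then 1 else 0) - density
  have card_mul_density : Fintype.card V * density = #A := mul_div_cancel₀ _ card_pos.ne'
  have density_le : density ≤ 1 / 2 := by
    rw [div_le_iff₀ card_pos]
    have : (2 : ℝ) * #A ≤ Fintype.card V := mod_cast hA
    linarith
  have sum_f : ∑ x, f x = 0 := by
    simp [f, card_mul_density]
  have sum_f_sq : ∑ x, f x ^ 2 = #A * (1 - density) := by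
    have expand (x : V) :
        f x ^ 2 = (if x ∈ A then 1 else 0) * (1 - 2 * density) + density ^ 2 := by
      simp only [f]
      split_ifs <;> ring
    simp only [expand, sum_add_distrib, ← sum_mul, sum_boole, filter_univ_mem, sum_const,
      card_univ, nsmul_eq_mul, sq, card_mul_density]
    ring
  have sq_diff (i : ι) (x : V) :
      (f (s i x) - f x) ^ 2 = if ¬(s i x ∈ A ↔ x ∈ A) then 1 else 0 := by
    simp only [f, sub_sub_sub_cancel_right]
    by_cases h : s i x ∈ A <;> by_cases h' : x ∈ A <;> simp [h, h']
  have poincare := hs f sum_f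
  simp only [sum_f_sq, sq_diff, sum_boole] at poincare
  calc (#A : ℝ) ≤ 2 * (#A * (1 - density)) := by nlinarith [(#A).cast_nonneg (α := ℝ)]
    _ ≤ 2 * (K * ∑ i, (#{x | ¬(s i x ∈ A ↔ x ∈ A)} : ℝ)) := by linarith
    _ = 2 * K * ∑ i, (#{x | ¬(s i x ∈ A ↔ x ∈ A)} : ℝ) := (mul_assoc ..).symm

end Expander

/-! ### Survival of the backward process -/

section Survival

open Finset
open scoped BigOperators

lemma log_one_sub_mul_ge {p z : ℝ} (hp : 0 ≤ p) (hp1 : p ≤ 1) (hz : 0 ≤ z) (hz1 : z < 1) :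
    p * Real.log (1 - z) + p * (1 - p) * z ^ 2 / 2 ≤ Real.log (1 - p * z) := by
  have hpz : |p * z| < 1 := by
    rw [abs_of_nonneg (by positivity)]
    exact (mul_le_of_le_one_left hz hp1).trans_lt hz1
  have hz_abs : |z| < 1 := by rwa [abs_of_nonneg hz]
  have series := ((Real.hasSum_pow_div_log_of_abs_lt_one hz_abs).mul_left p).sub
    (Real.hasSum_pow_div_log_of_abs_lt_one hpz)
  have second_term := le_hasSum series 1 fun n _ ↦ by
    have : p ^ (n + 1) ≤ p := pow_le_of_le_one hp hp1 n.succ_ne_zero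
    rw [mul_pow, mul_div_assoc, ← sub_mul]
    exact mul_nonneg (sub_nonneg.2 this) (by positivity)
  norm_num at second_term
  linarith

variable {V O ι : Type*} [DecidableEq V]

/-- The probability that a uniformly random label `o` moves `q` into `A`. -/
noncomputable def hitProb [Fintype O] (σ : O → V → V) (A : Finset V) (q : V) :
    ℝ :=
  𝔼 o, if σ o q ∈ A then 1 else 0

lemma hitProb_nonneg [Fintype O] {σ : O → V → V} (A : Finset V) (q : V) : 0 ≤ hitProb σ A q :=
  expect_nonneg fun o _ ↦ by split_ifs <;> norm_num

lemma hitProb_le_one [Fintype O] [Nonempty O] {σ : O → V → V} (A : Finset V) (q : V) :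
    hitProb σ A q ≤ 1 :=
  expect_le univ_nonempty fun o _ ↦ by split_ifs <;> norm_num

variable [Fintype V]

/-- The preimage of `A` under the random map of `V` that moves `q` to `σ (η q) q`. -/
def pre (σ : O → V → V) (η : V → O) (A : Finset V) : Finset V := {q | σ (η q) q ∈ A}

/-- The set of points whose trajectory ends in `A`, when the random maps at the times in the list
are applied from its last entry to its first. -/
def back (σ : O → V → V) (ω : ι → V → O) : List ι → Finset V → Finset V
  | [], A => A
  | t :: l, A => back σ ω l (pre σ (ω t) A)

lemma back_congr (σ : O → V → V) {ω ω' : ι → V → O} {l : List ι} (h : ∀ t ∈ l, ω t = ω' t)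
    (A : Finset V) : back σ ω l A = back σ ω' l A := by
  induction l generalizing A with
  | nil => rfl
  | cons t l ih =>
    rw [back, back, h t List.mem_cons_self, ih fun u hu ↦ h u (List.mem_cons_of_mem t hu)]

variable [Fintype O]

/-- One random step from `A` spreads it out: the indicators of `q ∈ pre σ η A` have total variance
at least `c * #A`, as long as `A` fills at most half of `V`. -/
def HasVarianceGap (σ : O → V → V) (c : ℝ) : Prop :=
  ∀ A : Finset V, 2 * #A ≤ Fintype.card V →
    c * #A ≤ ∑ q, hitProb σ A q * (1 - hitProb σ A q)

/-- The probability that, for independent uniformly random labels, some trajectory through the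
times in `l` ends in `A`. -/
noncomputable def survProb [Fintype ι] [DecidableEq ι] (σ : O → V → V) (l : List ι)
    (A : Finset V) : ℝ :=
  𝔼 ω : ι → V → O, if (back σ ω l A).Nonempty then 1 else 0

variable {σ : O → V → V}

lemma sum_hitProb [Nonempty O] (hσ : ∀ o, (σ o).Bijective) (A : Finset V) :
    ∑ q, hitProb σ A q = #A := by
  have preimage_card (o : O) : ∑ q, (if σ o q ∈ A then (1 : ℝ) else 0) = #A := by
    rw [(hσ o).sum_comp fun q ↦ if q ∈ A then (1 : ℝ) else 0, sum_boole, filter_univ_mem]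
  simp only [hitProb, ← expect_sum_comm, preimage_card, Fintype.expect_const]

lemma expect_card_pre [Nonempty O] (hσ : ∀ o, (σ o).Bijective) (A : Finset V) :
    𝔼 η, (#(pre σ η A) : ℝ) = #A := by
  rw [← sum_hitProb hσ]
  simp only [pre, ← sum_boole, expect_sum_comm]
  exact sum_congr rfl fun q _ ↦ expect_comp_eval (fun o ↦ if σ o q ∈ A then (1 : ℝ) else 0) q

lemma expect_pow_card_pre [Nonempty O] (A : Finset V) (z : ℝ) :
    𝔼 η, (1 - z) ^ #(pre σ η A) = ∏ q, (1 - hitProb σ A q * z) := by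
  have factor (q : V) : 𝔼 o, (if σ o q ∈ A then 1 - z else 1) = 1 - hitProb σ A q * z := by
    have split (o : O) : (if σ o q ∈ A then 1 - z else 1)
        = 1 - (if σ o q ∈ A then 1 else 0) * z := by split_ifs <;> ring
    simp only [split, expect_sub_distrib, ← expect_mul, hitProb, Fintype.expect_const]
  simp only [← factor, ← expect_prod_eval, prod_ite, prod_const, pre, one_pow, mul_one]

lemma HasVarianceGap.pow_card_le_expect [Nonempty O] {c : ℝ} (hc : 0 ≤ c)
    (hσ : ∀ o, (σ o).Bijective) (hgap : HasVarianceGap σ c) {A : Finset V}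
    (hA : 2 * #A ≤ Fintype.card V) {z : ℝ} (hz : 0 ≤ z) (hz1 : z ≤ 1 / 2) :
    (1 - (z - c * z ^ 2 / 4)) ^ #A ≤ 𝔼 η, (1 - z) ^ #(pre σ η A) := by
  have one_sub_pos : 0 < 1 - z := by linarith
  have base_le : 1 - (z - c * z ^ 2 / 4) ≤ Real.exp (Real.log (1 - z) + c * z ^ 2 / 2) := by
    rw [Real.exp_add, Real.exp_log one_sub_pos]
    have : 1 + c * z ^ 2 / 2 ≤ Real.exp (c * z ^ 2 / 2) := by
      linarith [Real.add_one_le_exp (c * z ^ 2 / 2)]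
    nlinarith [mul_le_mul_of_nonneg_left this one_sub_pos.le, mul_nonneg hc (sq_nonneg z)]
  have base_nonneg : 0 ≤ 1 - (z - c * z ^ 2 / 4) := by
    linarith [mul_nonneg hc (sq_nonneg z)]
  have factor_ge (q : V) :
      Real.exp (hitProb σ A q * Real.log (1 - z)
        + hitProb σ A q * (1 - hitProb σ A q) * z ^ 2 / 2) ≤ 1 - hitProb σ A q * z := by
    have hp := hitProb_le_one (σ := σ) A q
    rw [← Real.le_log_iff_exp_le (by nlinarith)]
    exact log_one_sub_mul_ge (hitProb_nonneg A q) hp hz (by linarith)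
  calc (1 - (z - c * z ^ 2 / 4)) ^ #A
      ≤ Real.exp (Real.log (1 - z) + c * z ^ 2 / 2) ^ #A := by gcongr
    _ = Real.exp (#A * Real.log (1 - z) + c * #A * (z ^ 2 / 2)) := by
        rw [← Real.exp_nat_mul]
        congr 1
        ring
    _ ≤ Real.exp (#A * Real.log (1 - z)
          + (∑ q, hitProb σ A q * (1 - hitProb σ A q)) * (z ^ 2 / 2)) := by
        gcongr
        exact hgap A hA
    _ = ∏ q, Real.exp (hitProb σ A q * Real.log (1 - z)
          + hitProb σ A q * (1 - hitProb σ A q) * z ^ 2 / 2) := by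
        simp only [← Real.exp_sum, sum_add_distrib, ← sum_mul, sum_hitProb hσ, mul_div_assoc]
    _ ≤ ∏ q, (1 - hitProb σ A q * z) :=
        prod_le_prod (fun q _ ↦ (Real.exp_pos _).le) fun q _ ↦ factor_ge q
    _ = 𝔼 η, (1 - z) ^ #(pre σ η A) := (expect_pow_card_pre A z).symm

/-- The discretized solution of `z' = -c z² / 4` with `z 0 = 1 / 2`. -/
noncomputable def survRate (c : ℝ) (s : ℕ) : ℝ := 4 / (c * s + 8)

lemma survRate_pos {c : ℝ} (hc : 0 ≤ c) (s : ℕ) : 0 < survRate c s := by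
  unfold survRate
  positivity

lemma survRate_le_half {c : ℝ} (hc : 0 ≤ c) (s : ℕ) : survRate c s ≤ 1 / 2 := by
  rw [survRate, div_le_div_iff₀ (by positivity) two_pos]
  linarith [mul_nonneg hc s.cast_nonneg]

lemma survRate_sub_le_survRate_succ {c : ℝ} (hc : 0 ≤ c) (s : ℕ) :
    survRate c s - c * survRate c s ^ 2 / 4 ≤ survRate c (s + 1) := by
  have hw : 0 < c * s + 8 := by positivity
  have succ_eq : c * (s + 1 : ℕ) + 8 = (c * s + 8) + c := by
    push_cast
    ring
  rw [survRate, survRate, succ_eq]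
  generalize c * (s : ℝ) + 8 = w at hw
  rw [le_div_iff₀ (by positivity)]
  calc (4 / w - c * (4 / w) ^ 2 / 4) * (w + c) = 4 - 4 * (c / w) ^ 2 := by
        field_simp
        ring
    _ ≤ 4 := sub_le_self 4 (by positivity)

variable [Fintype ι] [DecidableEq ι]

lemma survProb_nil (A : Finset V) [Nonempty O] :
    survProb σ ([] : List ι) A = if A.Nonempty then 1 else 0 := by
  change (𝔼 _ω : ι → V → O, if A.Nonempty then (1 : ℝ) else 0) = _
  rw [Fintype.expect_const]

lemma survProb_cons [Nonempty O] {t : ι} {l : List ι} (ht : t ∉ l) (A : Finset V) :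
    survProb σ (t :: l) A = 𝔼 η, survProb σ l (pre σ η A) := by
  have update_eq (ω : ι → V → O) (η : V → O) :
      back σ (Function.update ω t η) (t :: l) A = back σ ω l (pre σ η A) := by
    rw [back, Function.update_self]
    exact back_congr σ (fun u hu ↦ Function.update_of_ne (ne_of_mem_of_not_mem hu ht) ..) _
  rw [survProb, ← expect_expect_update _ t]
  simp only [update_eq]
  exact expect_comm univ univ _

lemma survProb_le_one [Nonempty O] (l : List ι) (A : Finset V) : survProb σ l A ≤ 1 :=
  expect_le univ_nonempty fun ω _ ↦ by split_ifs <;> norm_num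

theorem survProb_le [Nonempty O] {c : ℝ} (hc : 0 ≤ c) (hσ : ∀ o, (σ o).Bijective)
    (hgap : HasVarianceGap σ c) {l : List ι} (hl : l.Nodup) (A : Finset V) :
    survProb σ l A
      ≤ 2 * (1 - (1 - survRate c l.length) ^ #A) + 2 * #A / Fintype.card V := by
  induction l generalizing A with
  | nil =>
    rw [survProb_nil]
    split_ifs with hA
    · have : (1 / 2 : ℝ) ^ #A ≤ 1 / 2 :=
        pow_le_of_le_one (by norm_num) (by norm_num) hA.card_pos.ne'
      have : (0 : ℝ) ≤ 2 * #A / Fintype.card V := by positivity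
      norm_num [survRate] at *
      linarith
    · simp [not_nonempty_iff_eq_empty.1 hA]
  | cons t l ih =>
    obtain ⟨ht, hl⟩ := List.nodup_cons.1 hl
    set z := survRate c l.length
    set z' := survRate c (t :: l).length
    have z'_pos : 0 < z' := survRate_pos hc _
    have z'_le : z' ≤ 1 / 2 := survRate_le_half hc _
    by_cases hA : 2 * #A ≤ Fintype.card V
    · have decay : (1 - z') ^ #A ≤ 𝔼 η, (1 - z) ^ #(pre σ η A) :=
        calc (1 - z') ^ #A ≤ (1 - (z - c * z ^ 2 / 4)) ^ #A := by
              gcongr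
              · linarith
              · exact survRate_sub_le_survRate_succ hc _
          _ ≤ 𝔼 η, (1 - z) ^ #(pre σ η A) :=
              hgap.pow_card_le_expect hc hσ hA (survRate_pos hc _).le (survRate_le_half hc _)
      calc survProb σ (t :: l) A = 𝔼 η, survProb σ l (pre σ η A) := survProb_cons ht A
        _ ≤ 𝔼 η, (2 * (1 - (1 - z) ^ #(pre σ η A)) + 2 * #(pre σ η A) / Fintype.card V) :=
            expect_le_expect fun η _ ↦ ih hl _
        _ = 2 * (1 - 𝔼 η, (1 - z) ^ #(pre σ η A)) + 2 * #A / Fintype.card V := by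
            simp only [expect_add_distrib, ← mul_expect, expect_sub_distrib, Fintype.expect_const,
              ← expect_div, expect_card_pre hσ]
        _ ≤ 2 * (1 - (1 - z') ^ #A) + 2 * #A / Fintype.card V := by gcongr
    · have large : (Fintype.card V : ℝ) ≤ 2 * #A := mod_cast (not_le.1 hA).le
      have card_pos : (0 : ℝ) < Fintype.card V := by
        have : #A ≤ Fintype.card V := card_le_univ A
        exact Nat.cast_pos.2 (by omega)
      have one_le : 1 ≤ 2 * (#A : ℝ) / Fintype.card V := (one_le_div card_pos).2 large
      have : (1 - z') ^ #A ≤ 1 := pow_le_one₀ (by linarith) (by linarith)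
      linarith [survProb_le_one (σ := σ) (t :: l) A]

lemma survProb_singleton_le [Nonempty O] {c : ℝ} (hc : 0 < c) (hc8 : c ≤ 8)
    (hσ : ∀ o, (σ o).Bijective) (hgap : HasVarianceGap σ c) {l : List ι} (hl : l.Nodup) (p : V) :
    survProb σ l {p} ≤ 8 / c / (l.length + 1) + 2 / Fintype.card V := by
  have bound := survProb_le hc.le hσ hgap hl {p}
  have rate_le : 2 * survRate c l.length ≤ 8 / c / (l.length + 1) := by
    rw [survRate, div_div, mul_div_assoc', div_le_div_iff₀ (by positivity) (by positivity)]
    nlinarith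
  simp only [card_singleton, pow_one, Nat.cast_one, mul_one, sub_sub_cancel] at bound
  linarith

end Survival

section Gap

open Finset
open scoped BigOperators

variable {V O : Type*} [DecidableEq V] [Fintype O] {σ : O → V → V}

/-- The identity label keeps `hitProb σ A q` away from both `0` and `1` as soon as some label
moves `q` across the boundary of `A`. -/
lemma card_boundary_le {o₀ : O} (ho₀ : σ o₀ = id) (A : Finset V) (q : V) :
    (#{o | ¬(σ o q ∈ A ↔ q ∈ A)} : ℝ)
      ≤ Fintype.card O ^ 2 * (hitProb σ A q * (1 - hitProb σ A q)) := by
  have fixed : σ o₀ q ∈ A ↔ q ∈ A := by rw [ho₀, id]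
  have O_pos : (0 : ℝ) < Fintype.card O := Nat.cast_pos.2 (Fintype.card_pos_iff.2 ⟨o₀⟩)
  have total : (#{o | σ o q ∈ A} : ℝ) + #{o | ¬σ o q ∈ A} = Fintype.card O :=
    mod_cast card_filter_add_card_filter_not _
  have variance : (Fintype.card O : ℝ) ^ 2 * (hitProb σ A q * (1 - hitProb σ A q))
      = #{o | σ o q ∈ A} * #{o | ¬σ o q ∈ A} := by
    rw [hitProb, Fintype.expect_eq_sum_div_card, sum_boole]
    field_simp
    linear_combination (-(#{o | σ o q ∈ A} : ℝ)) * total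
  rw [variance]
  by_cases hq : q ∈ A
  · have : (1 : ℝ) ≤ #{o | σ o q ∈ A} :=
      mod_cast card_pos.2 ⟨o₀, (mem_filter_univ _).2 (fixed.2 hq)⟩
    simp only [hq, iff_true]
    exact le_mul_of_one_le_left (Nat.cast_nonneg _) this
  · have : (1 : ℝ) ≤ #{o | ¬σ o q ∈ A} :=
      mod_cast card_pos.2 ⟨o₀, (mem_filter_univ _).2 (fixed.not.2 hq)⟩
    simp only [hq, iff_false, not_not]
    exact le_mul_of_one_le_right (Nat.cast_nonneg _) this

lemma hasVarianceGap_of_expansion [Fintype V] {o₀ : O} (ho₀ : σ o₀ = id) {K : ℝ} (hK : 0 < K)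
    (hexp : ∀ A : Finset V, 2 * #A ≤ Fintype.card V →
      (#A : ℝ) ≤ K * ∑ o, (#{q | ¬(σ o q ∈ A ↔ q ∈ A)} : ℝ)) :
    HasVarianceGap σ (1 / (K * Fintype.card O ^ 2)) := by
  intro A hA
  have O_pos : (0 : ℝ) < Fintype.card O := Nat.cast_pos.2 (Fintype.card_pos_iff.2 ⟨o₀⟩)
  have boundary : ∑ o, (#{q | ¬(σ o q ∈ A ↔ q ∈ A)} : ℝ)
      ≤ Fintype.card O ^ 2 * ∑ q, hitProb σ A q * (1 - hitProb σ A q) := by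
    simp only [← sum_boole, mul_sum]
    rw [sum_comm]
    simp only [sum_boole]
    exact sum_le_sum fun q _ ↦ card_boundary_le ho₀ A q
  rw [one_div_mul_eq_div, div_le_iff₀ (by positivity)]
  calc (#A : ℝ) ≤ K * ∑ o, (#{q | ¬(σ o q ∈ A ↔ q ∈ A)} : ℝ) := hexp A hA
    _ ≤ K * (Fintype.card O ^ 2 * ∑ q, hitProb σ A q * (1 - hitProb σ A q)) := by gcongr
    _ = _ := by ring

end Gap

section Step

open Finset

variable {m : ℕ}

/-- The step of a lazy walk on the expander prescribed by a node label of five bits: bits `0`, `1`,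
`2` name a generator and bit `3` tells whether to apply it. Bit `4` is left free, as the output
bit of the node. -/
def step (o : Fin 5 → Bool) (x : VectorPair m) : VectorPair m :=
  if o 3 then generator m (o 0, o 1, o 2) x else x

lemma step_bijective (o : Fin 5 → Bool) : (step (m := m) o).Bijective := by
  by_cases h : o 3
  · have : step o = generator m (o 0, o 1, o 2) := by
      ext x : 1
      simp [step, h]
    exact this ▸ (generator m (o 0, o 1, o 2)).bijective
  · have : step (m := m) o = id := by
      ext x : 1
      simp [step, h]
    exact this ▸ Function.bijective_id

lemma step_update (o : Fin 5 → Bool) (v : Bool) :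
    step (m := m) (Function.update o 4 v) = step o := by
  ext x : 1
  simp [step]

lemma hasVarianceGap_step : HasVarianceGap (step (m := m)) (1 / 12288) := by
  let label (g : Bool × Bool × Bool) : Fin 5 → Bool := ![g.1, g.2.1, g.2.2, true, false]
  have label_injective : Function.Injective label := fun g g' h ↦ by
    have bit (i : Fin 5) := congrFun h i
    exact Prod.ext (bit 0) (Prod.ext (bit 1) (bit 2))
  have step_label (g : Bool × Bool × Bool) : step (label g) = generator m g := rfl
  have gap := hasVarianceGap_of_expansion (σ := step (m := m)) (o₀ := fun _ ↦ false)
    (K := 2 * 6) rfl (by norm_num) fun A hA ↦ by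
    refine (card_le_sum_card_of_sum_sq_le (fun f ↦ sum_sq_le_sum_generator) hA).trans ?_
    gcongr
    calc ∑ g, (#{x | ¬(generator m g x ∈ A ↔ x ∈ A)} : ℝ)
        = ∑ o ∈ univ.map ⟨label, label_injective⟩, (#{x | ¬(step o x ∈ A ↔ x ∈ A)} : ℝ) := by
          simp only [sum_map, Function.Embedding.coeFn_mk, step_label]
      _ ≤ ∑ o, (#{x | ¬(step o x ∈ A ↔ x ∈ A)} : ℝ) :=
          sum_le_univ_sum_of_nonneg fun o ↦ Nat.cast_nonneg _
  norm_num at gap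
  exact gap

end Step

/-! ### Walks through cyclic layers -/

section Dynamics

open Function Set

lemma exists_mem_periodicPts {X : Type*} [Finite X] [Nonempty X] (f : X → X) :
    ∃ x, x ∈ periodicPts f := by
  obtain ⟨x⟩ := ‹Nonempty X›
  obtain ⟨a, b, hne, heq⟩ := Finite.exists_ne_map_eq_of_infinite fun s : ℕ ↦ f^[s] x
  wlog hab : a < b generalizing a b
  · exact this b a hne.symm heq.symm (hne.lt_or_gt.resolve_left hab)
  refine ⟨f^[a] x, mk_mem_periodicPts (Nat.sub_pos_of_lt hab) ?_⟩
  rw [IsPeriodicPt, IsFixedPt, ← iterate_add_apply, Nat.sub_add_cancel hab.le]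
  exact heq.symm

variable {V Λ : Type*} {T : ℕ} {σ : Λ → V → V} {ω ω' : ZMod T → V → Λ} {c : ZMod T}
  {w : ZMod T × V}

/-- One step of the walk on `ZMod T × V`: the label `ω t p` of the node `(t, p)` prescribes the
move `σ (ω t p)` from the layer `t` to the layer `t + 1`. -/
def advance (σ : Λ → V → V) (ω : ZMod T → V → Λ) (w : ZMod T × V) : ZMod T × V :=
  (w.1 + 1, σ (uncurry ω w) w.2)

lemma advance_iterate_fst (s : ℕ) (w : ZMod T × V) : ((advance σ ω)^[s] w).1 = w.1 + s := by
  induction s with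
  | zero => simp
  | succ s ih => rw [iterate_succ_apply', advance, ih, Nat.cast_succ, add_assoc]

lemma advance_iterate_congr {k : ℕ}
    (h : ∀ j < k, uncurry ω ((advance σ ω)^[j] w) = uncurry ω' ((advance σ ω)^[j] w)) :
    (advance σ ω)^[k] w = (advance σ ω')^[k] w := by
  induction k with
  | zero => rfl
  | succ k ih =>
    rw [iterate_succ_apply', iterate_succ_apply', ← ih fun j hj ↦ h j (hj.trans k.lt_succ_self),
      advance, advance, h k k.lt_succ_self]

/-- The set of nodes visited by the walks that start in the layer `c`. -/
def reachable (σ : Λ → V → V) (ω : ZMod T → V → Λ) (c : ZMod T) : Set (ZMod T × V) :=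
  {w | ∃ (s : ℕ) (p : V), (advance σ ω)^[s] (c, p) = w}

lemma mem_reachable_iff :
    w ∈ reachable σ ω c ↔ ∃ p, (advance σ ω)^[(w.1 - c).val] (c, p) = w := by
  refine ⟨?_, fun ⟨p, hp⟩ ↦ ⟨_, p, hp⟩⟩
  rintro ⟨s, p, rfl⟩
  have full_turns : (c, ((advance σ ω)^[T * (s / T)] (c, p)).2)
      = (advance σ ω)^[T * (s / T)] (c, p) := by
    ext <;> simp [advance_iterate_fst]
  refine ⟨((advance σ ω)^[T * (s / T)] (c, p)).2, ?_⟩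
  rw [full_turns, advance_iterate_fst, add_sub_cancel_left, ZMod.val_natCast,
    ← iterate_add_apply, Nat.mod_add_div]

lemma reachable_congr (h : EqOn (uncurry ω) (uncurry ω') (reachable σ ω c)) :
    reachable σ ω c = reachable σ ω' c := by
  have iterate_eq (s : ℕ) (p : V) : (advance σ ω)^[s] (c, p) = (advance σ ω')^[s] (c, p) :=
    advance_iterate_congr fun j _ ↦ h ⟨j, p, rfl⟩
  simp only [reachable, iterate_eq]

lemma periodicPts_subset_reachable [NeZero T] :
    periodicPts (advance σ ω) ⊆ reachable σ ω c := by
  intro w hw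
  obtain ⟨u, -, hu⟩ := (bijOn_periodicPts (advance σ ω)).surjOn.iterate (w.1 - c).val hw
  have u_fst : u.1 = c := by
    have := advance_iterate_fst (σ := σ) (ω := ω) (w.1 - c).val u
    rw [hu, ZMod.natCast_zmod_val] at this
    linear_combination -this
  exact ⟨_, u.2, by rw [← u_fst]; exact hu⟩

lemma periodicPts_subset_of_eqOn [NeZero T]
    (h : EqOn (uncurry ω) (uncurry ω') (reachable σ ω c)) :
    periodicPts (advance σ ω) ⊆ periodicPts (advance σ ω') := by
  intro w hw
  have iterate_mem (j : ℕ) : (advance σ ω)^[j] w ∈ reachable σ ω c :=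
    periodicPts_subset_reachable <| (bijOn_periodicPts _).mapsTo.iterate j hw
  obtain ⟨k, hk, hkw⟩ := hw
  refine ⟨k, hk, ?_⟩
  rw [IsPeriodicPt, IsFixedPt, ← advance_iterate_congr fun j _ ↦ h (iterate_mem j)]
  exact hkw

lemma periodicPts_congr [NeZero T] (h : EqOn (uncurry ω) (uncurry ω') (reachable σ ω c)) :
    periodicPts (advance σ ω) = periodicPts (advance σ ω') :=
  (periodicPts_subset_of_eqOn h).antisymm <|
    periodicPts_subset_of_eqOn (reachable_congr h ▸ h.symm)

/-- A choice of a node of the layer `0` that lies on a cycle of the walk. It depends on the labels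
only through the set of periodic nodes. -/
noncomputable def root [Nonempty V] (σ : Λ → V → V) (ω : ZMod T → V → Λ) : ZMod T × V :=
  (0, Classical.epsilon fun p ↦ (0, p) ∈ periodicPts (advance σ ω))

lemma root_mem_periodicPts [NeZero T] [Finite V] [Nonempty V] (σ : Λ → V → V)
    (ω : ZMod T → V → Λ) : root σ ω ∈ periodicPts (advance σ ω) := by
  obtain ⟨w, hw⟩ := exists_mem_periodicPts (advance σ ω)
  refine Classical.epsilon_spec (p := fun p ↦ (0, p) ∈ periodicPts (advance σ ω))
    ⟨((advance σ ω)^[(-w.1).val] w).2, ?_⟩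
  have fst_eq : ((advance σ ω)^[(-w.1).val] w).1 = 0 := by simp [advance_iterate_fst]
  rw [← fst_eq]
  exact (bijOn_periodicPts _).mapsTo.iterate _ hw

lemma uncurry_root_congr [NeZero T] [Finite V] [Nonempty V]
    (h : EqOn (uncurry ω) (uncurry ω') (reachable σ ω c)) :
    uncurry ω (root σ ω) = uncurry ω' (root σ ω') := by
  rw [h (periodicPts_subset_reachable (root_mem_periodicPts σ ω)), root, root,
    periodicPts_congr h]

end Dynamics

section PastTimes

/-- The last `s` times before `t`, the latest one first. -/
def pastTimes {T : ℕ} (t : ZMod T) (s : ℕ) : List (ZMod T) :=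
  (List.range s).map fun j : ℕ ↦ t - 1 - j

lemma length_pastTimes {T : ℕ} (t : ZMod T) (s : ℕ) : (pastTimes t s).length = s := by
  rw [pastTimes, List.length_map, List.length_range]

lemma pastTimes_succ {T : ℕ} (t : ZMod T) (s : ℕ) :
    pastTimes t (s + 1) = (t - 1) :: pastTimes (t - 1) s := by
  rw [pastTimes, List.range_succ_eq_map, List.map_cons, List.map_map, Nat.cast_zero, sub_zero]
  refine congrArg (List.cons _) (List.map_congr_left fun j _ ↦ ?_)
  rw [Function.comp_apply, Nat.cast_succ]
  ring

lemma nodup_pastTimes {T : ℕ} (t : ZMod T) {s : ℕ} (hs : s ≤ T) : (pastTimes t s).Nodup := by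
  refine List.nodup_range.map_on fun j hj k hk hjk ↦ ?_
  have cast_eq := congrArg ZMod.val (sub_right_injective hjk)
  rwa [ZMod.val_natCast_of_lt ((List.mem_range.1 hj).trans_le hs),
    ZMod.val_natCast_of_lt ((List.mem_range.1 hk).trans_le hs)] at cast_eq

variable {V Λ : Type*} [Fintype V] [DecidableEq V] {T : ℕ} (σ : Λ → V → V)
  (ω : ZMod T → V → Λ)

lemma mem_back_pastTimes (t : ZMod T) (s : ℕ) (A : Finset V) (p : V) :
    p ∈ back σ ω (pastTimes t s) A ↔ ((advance σ ω)^[s] (t - s, p)).2 ∈ A := by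
  induction s generalizing t A with
  | zero => simp [pastTimes, back]
  | succ s ih =>
    have start : t - (s + 1 : ℕ) = t - 1 - s := by
      push_cast
      ring
    have last_layer : ((advance σ ω)^[s] (t - 1 - s, p)).1 = t - 1 := by
      rw [advance_iterate_fst, sub_add_cancel]
    rw [pastTimes_succ, back, ih, start, Function.iterate_succ_apply', pre,
      Finset.mem_filter_univ, advance, Function.uncurry, last_layer]

variable {σ ω}

lemma back_pastTimes_nonempty {c : ZMod T} {w : ZMod T × V} (hw : w ∈ reachable σ ω c) :
    (back σ ω (pastTimes w.1 (w.1 - c).val) {w.2}).Nonempty := by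
  obtain ⟨p, hp⟩ := mem_reachable_iff.1 hw
  have start : w.1 - ((w.1 - c).val : ZMod T) = c := by
    nth_rw 1 [← hp]
    rw [advance_iterate_fst, add_sub_cancel_right]
  exact ⟨p, by rw [mem_back_pastTimes, start, hp, Finset.mem_singleton]⟩

end PastTimes

/-! ### Decision trees -/

section DecisionTree

open Finset

variable {n : ℕ}

/-- The decision tree that queries the bits in the list, records the answers in `y`, and then
continues as the tree which `cont` prescribes for the record. -/
def queryAll : List (Fin n) → (Fin n → Bool) → ((Fin n → Bool) → DTree n) → DTree n
  | [], y, cont => cont y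
  | i :: l, y, cont => .node i (queryAll l (Function.update y i false) cont)
      (queryAll l (Function.update y i true) cont)

/-- The decision tree that runs `k` rounds: round `j` queries the bits `Q j y`, where `y` records
the answers of the rounds before it, and then continues as `cont` prescribes for the final record.
Bits that have not been queried are recorded as `false`. -/
noncomputable def queryRounds (Q : ℕ → (Fin n → Bool) → Finset (Fin n)) :
    ℕ → ((Fin n → Bool) → DTree n) → DTree n
  | 0, cont => cont fun _ ↦ false
  | k + 1, cont => queryRounds Q k fun y ↦ queryAll (Q k y).toList y cont

/-- The record of `queryRounds Q` on the input `x` after `k` rounds. -/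
def record (Q : ℕ → (Fin n → Bool) → Finset (Fin n)) (x : Fin n → Bool) : ℕ → Fin n → Bool
  | 0 => fun _ ↦ false
  | k + 1 => (Q k (record Q x k)).piecewise x (record Q x k)

lemma piecewise_toFinset_cons (i : Fin n) (l : List (Fin n)) (x y : Fin n → Bool) :
    (i :: l).toFinset.piecewise x y = l.toFinset.piecewise x (Function.update y i (x i)) := by
  ext j
  by_cases hj : j ∈ l
  · simp [piecewise, hj]
  · by_cases hji : j = i <;> simp [piecewise, hj, hji]

lemma queryAll_eval (l : List (Fin n)) (x y : Fin n → Bool) (cont : (Fin n → Bool) → DTree n) :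
    (queryAll l y cont).eval x = (cont (l.toFinset.piecewise x y)).eval x := by
  induction l generalizing y with
  | nil => rw [List.toFinset_nil, piecewise_empty, queryAll]
  | cons i l ih =>
    rw [piecewise_toFinset_cons, ← ih, queryAll, DTree.eval]
    cases x i <;> rfl

lemma queryAll_readsBit (l : List (Fin n)) (x y : Fin n → Bool)
    (cont : (Fin n → Bool) → DTree n) (i : Fin n) :
    (queryAll l y cont).readsBit x i
      ↔ i ∈ l ∨ (cont (l.toFinset.piecewise x y)).readsBit x i := by
  induction l generalizing y with
  | nil => rw [List.toFinset_nil, piecewise_empty, queryAll, or_iff_right List.not_mem_nil]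
  | cons a l ih =>
    have branch : (if x a then (queryAll l (Function.update y a true) cont).readsBit x i
        else (queryAll l (Function.update y a false) cont).readsBit x i)
          = (queryAll l (Function.update y a (x a)) cont).readsBit x i := by
      cases x a <;> rfl
    rw [piecewise_toFinset_cons, queryAll, DTree.readsBit, branch, Bool.or_eq_true, ih,
      beq_iff_eq, List.mem_cons, or_assoc, eq_comm]

variable {Q : ℕ → (Fin n → Bool) → Finset (Fin n)} {x : Fin n → Bool}

lemma queryRounds_eval (k : ℕ) (cont : (Fin n → Bool) → DTree n) :
    (queryRounds Q k cont).eval x = (cont (record Q x k)).eval x := by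
  induction k generalizing cont with
  | zero => rfl
  | succ k ih => rw [queryRounds, ih, queryAll_eval, toList_toFinset, record]

lemma queryRounds_readsBit (k : ℕ) (cont : (Fin n → Bool) → DTree n) (i : Fin n) :
    (queryRounds Q k cont).readsBit x i
      ↔ (∃ j < k, i ∈ Q j (record Q x j)) ∨ (cont (record Q x k)).readsBit x i := by
  induction k generalizing cont with
  | zero => simp [queryRounds, record]
  | succ k ih =>
    rw [queryRounds, ih, queryAll_readsBit, toList_toFinset, ← record, mem_toList,
      Nat.exists_lt_succ_right, or_assoc]

end DecisionTree

section RandomizedAlgorithm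

open Finset
open scoped BigOperators

variable {n : ℕ}

lemma balanced_of_comp_perm {f : (Fin n → Bool) → Bool} (π : Equiv.Perm (Fin n → Bool))
    (h : ∀ x, f (π x) = !f x) : balanced f := by
  have preimages_equiv : Nat.card {x // f x = true} = Nat.card {x // ¬f x = true} :=
    Nat.card_congr <| π.subtypeEquiv fun x ↦ by simp [h]
  have total : Nat.card {x // f x = true} + Nat.card {x // ¬f x = true} = 2 ^ n := by
    rw [← Nat.card_sum, Nat.card_congr (Equiv.sumCompl fun x ↦ f x = true)]
    simp
  rw [balanced]
  omega

lemma readProb_eq_sum_expect (A : RandAlg n) (i : Fin n) :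
    readProb A i = ∑ r, A.w r * 𝔼 x, if (A.tree r).readsBit x i then 1 else 0 := by
  have card_eq : (Fintype.card (Fin n → Bool) : ℝ) = 2 ^ n := by simp
  simp only [readProb, Fintype.expect_eq_sum_div_card, card_eq, sum_div, mul_div_assoc', mul_sum,
    mul_ite, mul_one, mul_zero]

end RandomizedAlgorithm

section CoalescingWalkAlgorithm

open Finset
open scoped BigOperators

variable {V β : Type*} {T n : ℕ} (e : Fin n ≃ (ZMod T × V) × β)

/-- The labelling of the nodes of `ZMod T × V` which the `n` input bits encode, for a given
numbering `e` of the label bits. -/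
def labels : (Fin n → Bool) ≃ (ZMod T → V → β → Bool) :=
  (e.arrowCongr (Equiv.refl Bool)).trans <| (Equiv.curry _ _ _).trans (Equiv.curry _ _ _)

lemma uncurry_labels_apply (x : Fin n → Bool) (w : ZMod T × V) (b : β) :
    Function.uncurry (labels e x) w b = x (e.symm (w, b)) := rfl

variable (σ : (β → Bool) → V → V) (b₀ : β)

/-- The function computed by the algorithm: the bit `b₀` of the label of the root. -/
noncomputable def rootBit [Nonempty V] (x : Fin n → Bool) : Bool :=
  Function.uncurry (labels e x) (root σ (labels e x)) b₀

/-- The labelling with the bit `b₀` of every label flipped. -/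
def flipBit [DecidableEq β] (ω : ZMod T → V → β → Bool) : ZMod T → V → β → Bool :=
  fun t p ↦ Function.update (ω t p) b₀ !(ω t p b₀)

lemma flipBit_involutive [DecidableEq β] :
    Function.Involutive (flipBit (V := V) (T := T) b₀) := fun ω ↦ by
  ext1 t
  ext1 p
  simp [flipBit]

lemma advance_flipBit [DecidableEq β] {σ : (β → Bool) → V → V} {b₀ : β}
    (hσ : ∀ o v, σ (Function.update o b₀ v) = σ o) (ω : ZMod T → V → β → Bool) :
    advance σ (flipBit b₀ ω) = advance σ ω := by
  ext1 w
  simp only [advance, Function.uncurry, flipBit, hσ]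

lemma balanced_rootBit [DecidableEq β] [Nonempty V] {σ : (β → Bool) → V → V} {b₀ : β}
    (hσ : ∀ o v, σ (Function.update o b₀ v) = σ o) : balanced (rootBit e σ b₀) := by
  refine balanced_of_comp_perm ((labels e).symm.permCongr (flipBit_involutive b₀).toPerm)
    fun x ↦ ?_
  have root_eq : root σ (flipBit b₀ (labels e x)) = root σ (labels e x) := by
    rw [root, root, advance_flipBit hσ]
  simp [rootBit, Equiv.permCongr_apply, root_eq, flipBit, Function.uncurry]

open Classical in
/-- The label bits of the nodes that the walks from the layer `c` visit after `j` steps, according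
to the input `y`. -/
noncomputable def frontier (c : ZMod T) (j : ℕ) (y : Fin n → Bool) : Finset (Fin n) :=
  {i | ∃ p, (advance σ (labels e y))^[j] (c, p) = (e i).1}

variable {e σ}

lemma mem_frontier {c : ZMod T} {j : ℕ} {y : Fin n → Bool} {i : Fin n} :
    i ∈ frontier e σ c j y ↔ ∃ p, (advance σ (labels e y))^[j] (c, p) = (e i).1 := by
  simp [frontier]

lemma record_frontier {c : ZMod T} (x : Fin n → Bool) {k j : ℕ} (hjk : j < k) (p : V) :
    Function.uncurry (labels e x) ((advance σ (labels e x))^[j] (c, p))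
      = Function.uncurry (labels e (record (frontier e σ c) x k))
          ((advance σ (labels e x))^[j] (c, p)) := by
  induction k generalizing j p with
  | zero => exact absurd hjk j.not_lt_zero
  | succ k ih =>
    ext b
    simp only [uncurry_labels_apply, record, piecewise]
    split_ifs with hmem
    · rfl
    rcases Nat.lt_succ_iff_lt_or_eq.1 hjk with hlt | rfl
    · exact congrFun (ih hlt p) b
    · refine absurd (mem_frontier.2 ⟨p, ?_⟩) hmem
      rw [Equiv.apply_symm_apply]
      exact (advance_iterate_congr fun i hi ↦ ih hi p).symm

lemma mem_frontier_record {c : ZMod T} {x : Fin n → Bool} {j : ℕ} {i : Fin n}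
    (hi : i ∈ frontier e σ c j (record (frontier e σ c) x j)) :
    (e i).1 ∈ reachable σ (labels e x) c := by
  obtain ⟨p, hp⟩ := mem_frontier.1 hi
  refine ⟨j, p, ?_⟩
  rw [← hp]
  exact advance_iterate_congr fun k hk ↦ record_frontier x hk p

variable (e σ)

/-- The decision tree that follows all the walks from the layer `c` once around the cycle `ZMod T`
and outputs the function computed from the labels of the visited nodes. -/
noncomputable def walkTree [Nonempty V] (c : ZMod T) : DTree n :=
  queryRounds (frontier e σ c) T fun y ↦ .leaf (rootBit e σ b₀ y)

variable {b₀}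

lemma walkTree_eval [NeZero T] [Finite V] [Nonempty V] (c : ZMod T) (x : Fin n → Bool) :
    (walkTree e σ b₀ c).eval x = rootBit e σ b₀ x := by
  rw [walkTree, queryRounds_eval, DTree.eval, rootBit, rootBit,
    ← uncurry_root_congr (ω := labels e x) (c := c)]
  intro w hw
  obtain ⟨p, hp⟩ := mem_reachable_iff.1 hw
  rw [← hp]
  exact record_frontier x (ZMod.val_lt _) p

variable {e σ}

lemma mem_reachable_of_readsBit [Nonempty V] {c : ZMod T} {x : Fin n → Bool} {i : Fin n}
    (h : (walkTree e σ b₀ c).readsBit x i) : (e i).1 ∈ reachable σ (labels e x) c := by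
  rw [walkTree, queryRounds_readsBit] at h
  rcases h with ⟨j, -, hi⟩ | hleaf
  · exact mem_frontier_record hi
  · simp [DTree.readsBit] at hleaf

variable (e σ b₀)

/-- The randomized algorithm that runs `walkTree` from a uniformly random layer. -/
noncomputable def walkAlg [NeZero T] [Nonempty V] : RandAlg n where
  m := T
  tree r := walkTree e σ b₀ (ZMod.finEquiv T r)
  w _ := 1 / T
  w_nonneg _ := by positivity
  w_sum := by simp [NeZero.ne T]

variable {e σ b₀} [Fintype V] [DecidableEq V] [Nonempty V] [Fintype β] [DecidableEq β] [NeZero T]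

lemma expect_readsBit_le_survProb (c : ZMod T) (i : Fin n) :
    (𝔼 x, if (walkTree e σ b₀ c).readsBit x i then (1 : ℝ) else 0)
      ≤ survProb σ (pastTimes (e i).1.1 ((e i).1.1 - c).val) {(e i).1.2} := by
  rw [survProb, ← expect_equiv (labels e) (s := univ) (t := univ) (by simp) fun x _ ↦ rfl]
  refine expect_le_expect fun x _ ↦ ?_
  by_cases h : (walkTree e σ b₀ c).readsBit x i
  · rw [if_pos h, if_pos (back_pastTimes_nonempty (mem_reachable_of_readsBit h))]
  · rw [if_neg h]
    split_ifs <;> norm_num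

lemma sum_comp_val_zmod (g : ℕ → ℝ) : ∑ a : ZMod T, g a.val = ∑ s ∈ range T, g s := by
  obtain ⟨k, rfl⟩ := Nat.exists_eq_succ_of_ne_zero (NeZero.ne T)
  exact Fin.sum_univ_eq_sum_range g (k + 1)

lemma sum_one_div_succ_le (k : ℕ) : ∑ s ∈ range k, 1 / ((s : ℝ) + 1) ≤ 1 + Real.log k := by
  have := harmonic_le_one_add_log k
  simpa [harmonic] using this

theorem readProb_walkAlg_le {c : ℝ} (hc : 0 < c) (hc8 : c ≤ 8) (hσ : ∀ o, (σ o).Bijective)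
    (hgap : HasVarianceGap σ c) (i : Fin n) :
    readProb (walkAlg e σ b₀) i ≤ 8 / c * (1 + Real.log T) / T + 2 / Fintype.card V := by
  have T_pos : (0 : ℝ) < T := Nat.cast_pos.2 (NeZero.pos T)
  calc readProb (walkAlg e σ b₀) i
      = 1 / T * ∑ a : ZMod T, 𝔼 x, if (walkTree e σ b₀ a).readsBit x i then (1 : ℝ) else 0 := by
        rw [readProb_eq_sum_expect, mul_sum, ← (ZMod.finEquiv T).toEquiv.sum_comp]
        rfl
    _ ≤ 1 / T * ∑ a : ZMod T, (8 / c / (((e i).1.1 - a).val + 1) + 2 / Fintype.card V) := by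
        gcongr with a
        have length := length_pastTimes (e i).1.1 ((e i).1.1 - a).val
        have := survProb_singleton_le hc hc8 hσ hgap
          (nodup_pastTimes (e i).1.1 (ZMod.val_lt ((e i).1.1 - a)).le) (e i).1.2
        rw [length] at this
        exact (expect_readsBit_le_survProb a i).trans this
    _ = 1 / T * ∑ s ∈ range T, (8 / c / (s + 1) + 2 / Fintype.card V) := by
        rw [← sum_comp_val_zmod, ← (Equiv.subLeft (e i).1.1).sum_comp fun a : ZMod T ↦
          8 / c / ((a.val : ℝ) + 1) + 2 / (Fintype.card V : ℝ)]
        rfl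
    _ = 8 / c * (∑ s ∈ range T, 1 / ((s : ℝ) + 1)) / T + 2 / Fintype.card V := by
        simp only [sum_add_distrib, sum_const, card_range, nsmul_eq_mul, mul_sum, mul_one_div]
        field_simp
    _ ≤ 8 / c * (1 + Real.log T) / T + 2 / Fintype.card V := by
        gcongr
        exact sum_one_div_succ_le T

end CoalescingWalkAlgorithm

section Parameters

open Finset

lemma one_add_log_le {r : ℕ} (hr : r ≠ 0) : 1 + Real.log (4 ^ r * r) ≤ 4 * r := by
  have r_pos : (0 : ℝ) < r := Nat.cast_pos.2 (Nat.pos_of_ne_zero hr)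
  have log_r : Real.log r ≤ r - 1 := Real.log_le_sub_one_of_pos r_pos
  have log_four : Real.log 4 ≤ 4 - 1 := Real.log_le_sub_one_of_pos four_pos
  rw [Real.log_mul (by positivity) r_pos.ne', Real.log_pow]
  nlinarith

lemma le_log_four_pow (r : ℕ) : r ≤ Real.log (4 ^ r) := by
  have one_le : 1 ≤ Real.log 4 := by
    rw [Real.le_log_iff_exp_le four_pos]
    linarith [Real.exp_one_lt_d9]
  rw [Real.log_pow]
  exact le_mul_of_one_le_right r.cast_nonneg one_le

lemma one_div_four_pow_le {r n : ℕ} (hr : r ≠ 0) (hn : n = 4 ^ r * r * 4 ^ r * 5) :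
    1 / 4 ^ r ≤ 3 * √(Real.log n) / √n := by
  have one_le_r : (1 : ℝ) ≤ r := Nat.one_le_cast.2 (Nat.pos_of_ne_zero hr)
  have n_eq : (n : ℝ) = 5 * (4 ^ r) ^ 2 * r := by
    rw [hn]
    push_cast
    ring
  have n_pos : (0 : ℝ) < n := by
    rw [n_eq]
    positivity
  have four_pow_le : (4 : ℝ) ^ r ≤ n := by
    have : (1 : ℝ) ≤ 4 ^ r := one_le_pow₀ (by norm_num)
    rw [n_eq]
    nlinarith
  have r_le_log : r ≤ Real.log n :=
    (le_log_four_pow r).trans (Real.log_le_log (by positivity) four_pow_le)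
  have log_nonneg : 0 ≤ Real.log n := by linarith
  have sqrt_le : √n ≤ 3 * √(Real.log n) * 4 ^ r := by
    rw [Real.sqrt_le_left (by positivity), mul_pow, mul_pow, Real.sq_sqrt log_nonneg, n_eq]
    calc 5 * (4 ^ r) ^ 2 * (r : ℝ) ≤ 3 ^ 2 * (4 ^ r) ^ 2 * Real.log n := by
          gcongr
          norm_num
      _ = _ := by rw [← n_eq]; ring
  rwa [div_le_div_iff₀ (by positivity) (Real.sqrt_pos.2 n_pos), one_mul]

lemma card_vectorPair (m : ℕ) : Fintype.card (VectorPair m) = 4 ^ (m + 2) := by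
  rw [Fintype.card_fun, Fintype.card_fun, ZMod.card, Fintype.card_fin, Fintype.card_bool,
    pow_right_comm]
  norm_num

theorem readProb_walkAlg_step_le {m n T : ℕ} [NeZero T] (hT : T = 4 ^ (m + 2) * (m + 2))
    (e : Fin n ≃ (ZMod T × VectorPair m) × Fin 5) (i : Fin n) :
    readProb (walkAlg e step 4) i ≤ (4 * (8 / (1 / 12288)) + 2) * (1 / 4 ^ (m + 2)) := by
  have T_eq : (T : ℝ) = 4 ^ (m + 2) * (m + 2 : ℕ) := mod_cast hT
  calc readProb (walkAlg e step 4) i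
      ≤ 8 / (1 / 12288) * (1 + Real.log T) / T + 2 / Fintype.card (VectorPair m) :=
        readProb_walkAlg_le (by norm_num) (by norm_num) step_bijective hasVarianceGap_step i
    _ ≤ 8 / (1 / 12288) * (4 * (m + 2 : ℕ)) / (4 ^ (m + 2) * (m + 2 : ℕ)) + 2 / 4 ^ (m + 2) := by
        rw [T_eq, card_vectorPair, Nat.cast_pow, Nat.cast_ofNat]
        gcongr
        exact one_add_log_le (m + 1).succ_ne_zero
    _ = (4 * (8 / (1 / 12288)) + 2) * (1 / 4 ^ (m + 2)) := by
        field_simp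

end Parameters

end CoalescingWalk

open CoalescingWalk

/-- There exist a constant `C > 0` and infinitely many positive
integers `n` for which there is a balanced Boolean function on `n` bits together
with a randomized decision-tree algorithm that on every input outputs `f x` with
probability 1, and whose revealment satisfies
`δ = max_i δ_i ≤ C · n^(-1/2) · √(log n)`. -/
theorem statement0 :
    ∃ C > (0 : ℝ), ∀ N : ℕ, ∃ n, N ≤ n ∧ 0 < n ∧
      ∃ (f : (Fin n → Bool) → Bool) (A : RandAlg n),
        balanced f ∧
        (∀ r x, (A.tree r).eval x = f x) ∧
        (∀ i, readProb A i ≤ C * Real.sqrt (Real.log n) / Real.sqrt n) := by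
  refine ⟨(4 * (8 / (1 / 12288)) + 2) * 3, by norm_num, fun m ↦ ?_⟩
  obtain ⟨T, hT⟩ : ∃ T, T = 4 ^ (m + 2) * (m + 2) := ⟨_, rfl⟩
  have : NeZero T := ⟨by rw [hT]; positivity⟩
  obtain ⟨n, hn⟩ : ∃ n, n = 4 ^ (m + 2) * (m + 2) * 4 ^ (m + 2) * 5 := ⟨_, rfl⟩
  have card_eq : Fintype.card ((ZMod T × VectorPair m) × Fin 5) = n := by
    simp only [Fintype.card_prod, ZMod.card, card_vectorPair, Fintype.card_fin, hn, hT]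
  let e : Fin n ≃ (ZMod T × VectorPair m) × Fin 5 := (Fintype.equivFinOfCardEq card_eq).symm
  have m_lt_n : m < n := by
    have : 0 < 4 ^ (m + 2) := by positivity
    rw [hn]
    nlinarith [Nat.mul_pos this this]
  refine ⟨n, m_lt_n.le, by omega, rootBit e step 4, walkAlg e step 4,
    balanced_rootBit e step_update, fun r x ↦ walkTree_eval e step _ x, fun i ↦ ?_⟩
  calc readProb (walkAlg e step 4) i
      ≤ (4 * (8 / (1 / 12288)) + 2) * (1 / 4 ^ (m + 2)) := readProb_walkAlg_step_le hT e i
    _ ≤ (4 * (8 / (1 / 12288)) + 2) * (3 * √(Real.log n) / √n) := by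
        exact mul_le_mul_of_nonneg_left (one_div_four_pow_le (m + 1).succ_ne_zero hn) (by norm_num)
    _ = _ := by ring
end

section
/- For every ε > 0 there exist a constant C > 0 and infinitely many positive integers n for which there is a balanced Boolean function f : {0,1}^n → {0,1} (i.e., Pr[f(x)=1] = 1/2 for x uniform on {0,1}^n) together with a randomized decision-tree algorithm A such that Pr[A's output on x differs from f(x)] ≤ ε (probability over uniform x and the algorithm's randomness) and whose revealment satisfies δ = max_i δ_i ≤ C · n^{-1/2}. -/
/-!
Arrange the input bits in `L` layers, each indexed by the `W = 2 ^ K` bit strings of length `K`, and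
walk through the layers: at position `s` of the current layer read the bit there and prepend it to
`s`, dropping the last entry of `s`, to get the position in the next layer. The function is the last
bit read by the walk from a fixed starting position; the algorithm starts the walk at a uniformly
random position instead.

The step preserves the uniform distribution, so the random walk reads each bit with probability at
most `1 / W`. Two walks in different positions read independent fair bits, and coalesce once these
have agreed `K` times in a row, which takes expected time at most `2 ^ (K + 1) = 2 * W`. By Markov's
inequality the outputs differ with probability at most `2 * W / L`. Taking `L` a large constant
times `W` makes this at most `ε`, and then `n = L * W` is of order `W ^ 2`.
-/

open Finset Function
open scoped BigOperators

namespace DTree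

variable {n : ℕ} {T : DTree n}

theorem eval_eq_of_eq_on_read {x y : Fin n → Bool} (h : ∀ j, T.readsBit x j → x j = y j) :
    T.eval x = T.eval y := by
  induction T with
  | leaf b => rfl
  | node i T₀ T₁ ih₀ ih₁ =>
    have hi : x i = y i := h i (by simp [readsBit])
    simp only [eval, ← hi]
    cases hx : x i
    · exact ih₀ fun j hj ↦ h j (by simp [readsBit, hx, hj])
    · exact ih₁ fun j hj ↦ h j (by simp [readsBit, hx, hj])

theorem readsBit_eq_of_eq_on_read {x y : Fin n → Bool} (h : ∀ j, T.readsBit x j → x j = y j) :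
    T.readsBit x = T.readsBit y := by
  induction T with
  | leaf b => rfl
  | node i T₀ T₁ ih₀ ih₁ =>
    have hi : x i = y i := h i (by simp [readsBit])
    funext k
    simp only [readsBit, ← hi]
    cases hx : x i
    · simp [ih₀ fun j hj ↦ h j (by simp [readsBit, hx, hj])]
    · simp [ih₁ fun j hj ↦ h j (by simp [readsBit, hx, hj])]

variable {s : Set (Fin n)}

theorem dependsOn_eval (h : ∀ x j, T.readsBit x j → j ∈ s) : DependsOn T.eval s :=
  fun x _ hxy ↦ eval_eq_of_eq_on_read fun j hj ↦ hxy j (h x j hj)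

theorem dependsOn_readsBit (h : ∀ x j, T.readsBit x j → j ∈ s) : DependsOn T.readsBit s :=
  fun x _ hxy ↦ readsBit_eq_of_eq_on_read fun j hj ↦ hxy j (h x j hj)

end DTree

section UniformProb

theorem expect_bool (F : Bool → ℝ) : 𝔼 b, F b = (F false + F true) / 2 := by
  rw [Fintype.expect_eq_sum_div_card, Fintype.sum_bool, Fintype.card_bool, add_comm, Nat.cast_ofNat]

variable {ι : Type*} [Fintype ι] [DecidableEq ι]

/-- The probability of the event `p` for a uniformly random input. -/
noncomputable def uniformProb (p : (ι → Bool) → Bool) : ℝ :=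
  𝔼 x, if p x then 1 else 0

theorem uniformProb_le_one (p : (ι → Bool) → Bool) : uniformProb p ≤ 1 :=
  expect_le univ_nonempty fun x _ ↦ by split_ifs <;> norm_num

@[simp]
theorem uniformProb_false : uniformProb (fun _ : ι → Bool ↦ false) = 0 := by
  simp [uniformProb]

@[simp]
theorem uniformProb_true : uniformProb (fun _ : ι → Bool ↦ true) = 1 := by
  simp [uniformProb]

theorem uniformProb_apply_bit (i : ι) {F : Bool → (ι → Bool) → Bool}
    (hF : ∀ b, DependsOn (F b) {i}ᶜ) :
    uniformProb (fun x ↦ F (x i) x) = 𝔼 b, uniformProb (F b) := by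
  have flip_involutive : Involutive fun x : ι → Bool ↦ update x i (!x i) := fun x ↦ by simp
  have hflip (b : Bool) (x : ι → Bool) : F b (update x i (!x i)) = F b x :=
    hF b fun j hj ↦ update_of_ne hj _ _
  have flipped : uniformProb (fun x ↦ F (x i) x) = uniformProb fun x ↦ F (!x i) x :=
    Fintype.expect_equiv flip_involutive.toPerm _ _ fun x ↦ by simp [hflip]
  have both : uniformProb (fun x ↦ F (x i) x) + uniformProb (fun x ↦ F (!x i) x) =
      uniformProb (F false) + uniformProb (F true) := by
    simp only [uniformProb, ← expect_add_distrib]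
    refine expect_congr rfl fun x _ ↦ ?_
    rcases Bool.eq_false_or_eq_true (x i) with h | h <;> simp [h, add_comm]
  rw [expect_bool]
  linarith

end UniformProb

section RandAlg

variable {n : ℕ}

theorem uniformProb_eq_sum_div (p : (Fin n → Bool) → Bool) :
    uniformProb p = (∑ x, if p x then 1 else 0) / 2 ^ n := by
  simp [uniformProb, Fintype.expect_eq_sum_div_card]

theorem balanced_of_uniformProb_eq_half {f : (Fin n → Bool) → Bool}
    (hf : uniformProb f = 1 / 2) : balanced f := by
  rw [uniformProb_eq_sum_div, sum_boole, div_eq_iff (by positivity)] at hf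
  rw [balanced, Nat.card_eq_fintype_card, Fintype.card_subtype]
  have : (2 : ℝ) * #{x | f x = true} = 2 ^ n := by linarith
  exact_mod_cast this

variable {S : Type*} [Fintype S] [Nonempty S]

/-- The randomized algorithm that runs a uniformly random member of a finite family of trees. -/
noncomputable def RandAlg.uniform (T : S → DTree n) : RandAlg n where
  m := Fintype.card S
  tree := T ∘ (Fintype.equivFin S).symm
  w _ := 1 / Fintype.card S
  w_nonneg _ := by positivity
  w_sum := by simp

theorem RandAlg.sum_w_uniform (T : S → DTree n) (p : DTree n → (Fin n → Bool) → Bool) :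
    (∑ r, ∑ x, if p ((uniform T).tree r) x then (uniform T).w r else 0) / 2 ^ n =
      𝔼 s, uniformProb (p (T s)) := by
  have sum_eq_uniformProb (s : S) :
      (∑ x, if p (T s) x then 1 / (Fintype.card S : ℝ) else 0) / 2 ^ n =
        uniformProb (p (T s)) / Fintype.card S := by
    rw [uniformProb_eq_sum_div, div_right_comm, sum_div univ _ (Fintype.card S : ℝ)]
    simp only [ite_div, zero_div]
  rw [sum_div, Fintype.expect_eq_sum_div_card, sum_div]
  exact Fintype.sum_equiv (Fintype.equivFin S).symm _ _ fun r ↦ sum_eq_uniformProb _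

theorem readProb_uniform (T : S → DTree n) (i : Fin n) :
    readProb (RandAlg.uniform T) i = 𝔼 s, uniformProb fun x ↦ (T s).readsBit x i :=
  RandAlg.sum_w_uniform T fun T' x ↦ T'.readsBit x i

theorem errProb_uniform (T : S → DTree n) (f : (Fin n → Bool) → Bool) :
    errProb (RandAlg.uniform T) f = 𝔼 s, uniformProb fun x ↦ (T s).eval x != f x := by
  simpa only [errProb, bne_iff_ne] using RandAlg.sum_w_uniform T fun T' x ↦ T'.eval x != f x

end RandAlg

section WalkTree

variable {n : ℕ} {S : Type*} {step : S → Bool → S} {out : S → Bool}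

/-- The decision tree of a layered walk on the state space `S`: in state `s` it reads the bit
`c 0 s` that the first layer assigns to `s`, moves to the state `step s b` for the bit value `b`
found there, and goes on with the remaining layers. It outputs `out` of its last state. -/
def walkTree (step : S → Bool → S) (out : S → Bool) : {L : ℕ} → (Fin L → S → Fin n) → S → DTree n
  | 0, _, s => .leaf (out s)
  | _ + 1, c, s => .node (c 0 s) (walkTree step out (Fin.tail c) (step s false))
      (walkTree step out (Fin.tail c) (step s true))

theorem eval_walkTree_succ {L : ℕ} (c : Fin (L + 1) → S → Fin n) (s : S) (x : Fin n → Bool) :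
    (walkTree step out c s).eval x =
      (walkTree step out (Fin.tail c) (step s (x (c 0 s)))).eval x := by
  cases hx : x (c 0 s) <;> simp [walkTree, DTree.eval, hx]

theorem readsBit_walkTree_succ {L : ℕ} (c : Fin (L + 1) → S → Fin n) (s : S) (x : Fin n → Bool)
    (i : Fin n) :
    (walkTree step out c s).readsBit x i =
      (c 0 s == i || (walkTree step out (Fin.tail c) (step s (x (c 0 s)))).readsBit x i) := by
  cases hx : x (c 0 s) <;> simp [walkTree, DTree.readsBit, hx]

theorem exists_eq_of_readsBit_walkTree {L : ℕ} {c : Fin L → S → Fin n} {s : S}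
    {x : Fin n → Bool} {i : Fin n} (h : (walkTree step out c s).readsBit x i) :
    ∃ t s', c t s' = i := by
  induction L generalizing s with
  | zero => simp [walkTree, DTree.readsBit] at h
  | succ L ih =>
    rw [readsBit_walkTree_succ, Bool.or_eq_true, beq_iff_eq] at h
    obtain hi | hi := h
    · exact ⟨0, s, hi⟩
    · obtain ⟨t, s', hts⟩ := ih hi
      exact ⟨t.succ, s', hts⟩

theorem tail_injective2 {α : Type*} {L : ℕ} {c : Fin (L + 1) → S → α} (hc : Injective2 c) :
    Injective2 (Fin.tail c) :=
  fun _ _ _ _ h ↦ (hc h).imp_left (Fin.succ_injective L ·)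

theorem mem_compl_of_readsBit_walkTree_tail {L : ℕ} {c : Fin (L + 1) → S → Fin n}
    (hc : Injective2 c) (s s' : S) (x : Fin n → Bool) (j : Fin n)
    (h : (walkTree step out (Fin.tail c) s).readsBit x j) : j ∈ ({c 0 s'}ᶜ : Set (Fin n)) := by
  obtain ⟨t, r, rfl⟩ := exists_eq_of_readsBit_walkTree h
  exact fun h ↦ Fin.succ_ne_zero t (hc h).1

theorem dependsOn_eval_walkTree_tail {L : ℕ} {c : Fin (L + 1) → S → Fin n} (hc : Injective2 c)
    (s s' : S) : DependsOn (walkTree step out (Fin.tail c) s).eval {c 0 s'}ᶜ :=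
  DTree.dependsOn_eval (mem_compl_of_readsBit_walkTree_tail hc s s')

theorem dependsOn_readsBit_walkTree_tail {L : ℕ} {c : Fin (L + 1) → S → Fin n}
    (hc : Injective2 c) (s s' : S) :
    DependsOn (walkTree step out (Fin.tail c) s).readsBit {c 0 s'}ᶜ :=
  DTree.dependsOn_readsBit (mem_compl_of_readsBit_walkTree_tail hc s s')

theorem uniformProb_eval_walkTree_succ {L : ℕ} {c : Fin (L + 1) → S → Fin n} (hc : Injective2 c)
    (s : S) :
    uniformProb (walkTree step out c s).eval =
      𝔼 b, uniformProb (walkTree step out (Fin.tail c) (step s b)).eval := by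
  rw [← uniformProb_apply_bit (c 0 s) fun b ↦ dependsOn_eval_walkTree_tail hc (step s b) s]
  exact congrArg uniformProb (funext (eval_walkTree_succ c s))

theorem uniformProb_eval_walkTree (hout : ∀ s b, out (step s b) = b) {L : ℕ}
    {c : Fin (L + 1) → S → Fin n} (hc : Injective2 c) (s : S) :
    uniformProb (walkTree step out c s).eval = 1 / 2 := by
  induction L generalizing s with
  | zero =>
    rw [uniformProb_eval_walkTree_succ hc, expect_bool]
    simp [walkTree, DTree.eval, hout]
  | succ L ih =>
    rw [uniformProb_eval_walkTree_succ hc]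
    simp only [ih (tail_injective2 hc), Fintype.expect_const]

theorem readsBit_walkTree_apply_zero {L : ℕ} {c : Fin (L + 1) → S → Fin n} (hc : Injective2 c)
    {s s' : S} (hs : s ≠ s') (x : Fin n → Bool) :
    (walkTree step out c s).readsBit x (c 0 s') = false := by
  have not_first : (c 0 s == c 0 s') = false := beq_eq_false_iff_ne.2 fun h ↦ hs (hc h).2
  rw [readsBit_walkTree_succ, not_first, Bool.false_or]
  exact Bool.eq_false_iff.2 fun h ↦ mem_compl_of_readsBit_walkTree_tail hc _ s' x _ h rfl

theorem uniformProb_readsBit_walkTree_succ {L : ℕ} {c : Fin (L + 1) → S → Fin n}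
    (hc : Injective2 c) {s : S} {i : Fin n} (hi : c 0 s ≠ i) :
    uniformProb (fun x ↦ (walkTree step out c s).readsBit x i) =
      𝔼 b, uniformProb fun x ↦ (walkTree step out (Fin.tail c) (step s b)).readsBit x i := by
  simp only [readsBit_walkTree_succ, beq_eq_false_iff_ne.2 hi, Bool.false_or]
  exact uniformProb_apply_bit (c 0 s)
    (F := fun b x ↦ (walkTree step out (Fin.tail c) (step s b)).readsBit x i)
    fun b _ _ hxy ↦ congrFun (dependsOn_readsBit_walkTree_tail hc (step s b) s hxy) i

theorem expect_uniformProb_readsBit_walkTree_le [Fintype S] [Nonempty S]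
    (hstep : ∀ F : S → ℝ, 𝔼 s, 𝔼 b, F (step s b) = 𝔼 s, F s) {L : ℕ}
    {c : Fin L → S → Fin n} (hc : Injective2 c) (i : Fin n) :
    𝔼 s, uniformProb (fun x ↦ (walkTree step out c s).readsBit x i) ≤ 1 / Fintype.card S := by
  classical
  induction L with
  | zero => simp [walkTree, DTree.readsBit]
  | succ L ih =>
    by_cases hi : ∃ s₀, c 0 s₀ = i
    · obtain ⟨s₀, rfl⟩ := hi
      have only_from (s : S) :
          uniformProb (fun x ↦ (walkTree step out c s).readsBit x (c 0 s₀)) ≤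
            if s = s₀ then 1 else 0 := by
        split_ifs with hs
        · exact uniformProb_le_one _
        · simp only [readsBit_walkTree_apply_zero hc hs, uniformProb_false, le_refl]
      calc _ ≤ 𝔼 s, if s = s₀ then (1 : ℝ) else 0 := expect_le_expect fun s _ ↦ only_from s
        _ = 1 / Fintype.card S := by simp
    · simp only [uniformProb_readsBit_walkTree_succ hc fun h ↦ hi ⟨_, h⟩]
      rw [hstep fun s ↦ uniformProb fun x ↦ (walkTree step out (Fin.tail c) s).readsBit x i]
      exact ih (tail_injective2 hc)

theorem uniformProb_eval_walkTree_bne_succ {L : ℕ} {c : Fin (L + 1) → S → Fin n}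
    (hc : Injective2 c) {s s' : S} (hs : s ≠ s') :
    uniformProb (fun x ↦ (walkTree step out c s).eval x != (walkTree step out c s').eval x) =
      𝔼 b, 𝔼 b', uniformProb fun x ↦
        (walkTree step out (Fin.tail c) (step s b)).eval x !=
          (walkTree step out (Fin.tail c) (step s' b')).eval x := by
  have hcs : c 0 s' ≠ c 0 s := fun h ↦ hs (hc h).2.symm
  have hdep (r r' q : S) : DependsOn (fun x ↦ (walkTree step out (Fin.tail c) r).eval x !=
      (walkTree step out (Fin.tail c) r').eval x) {c 0 q}ᶜ := fun x y hxy ↦ by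
    simp only [dependsOn_eval_walkTree_tail hc _ q hxy]
  calc _ = 𝔼 b, uniformProb fun x ↦ (walkTree step out (Fin.tail c) (step s b)).eval x !=
          (walkTree step out (Fin.tail c) (step s' (x (c 0 s')))).eval x := by
        simp only [eval_walkTree_succ c]
        refine uniformProb_apply_bit (c 0 s)
          (F := fun b x ↦ (walkTree step out (Fin.tail c) (step s b)).eval x !=
            (walkTree step out (Fin.tail c) (step s' (x (c 0 s')))).eval x) fun b x y hxy ↦ ?_
        simp only [hxy (c 0 s') hcs]
        exact hdep _ _ s hxy
    _ = _ := expect_congr rfl fun b _ ↦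
        uniformProb_apply_bit (c 0 s') fun _ ↦ hdep _ _ _

-- `V` dominates the expected number of steps until the two walks coalesce, so this is Markov's
-- inequality.
theorem mul_uniformProb_eval_walkTree_bne_le {V : S → S → ℝ} (hV : ∀ s s', 0 ≤ V s s')
    (hstep : ∀ s s', s ≠ s' → 1 + 𝔼 b, 𝔼 b', V (step s b) (step s' b') ≤ V s s')
    {L : ℕ} {c : Fin L → S → Fin n} (hc : Injective2 c) (s s' : S) :
    L * uniformProb (fun x ↦
      (walkTree step out c s).eval x != (walkTree step out c s').eval x) ≤ V s s' := by
  induction L generalizing s s' with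
  | zero => simpa using hV s s'
  | succ L ih =>
    rcases eq_or_ne s s' with rfl | hs
    · simpa using hV s s
    · have le_one := uniformProb_le_one fun x ↦
        (walkTree step out c s).eval x != (walkTree step out c s').eval x
      have le_expect : L * uniformProb (fun x ↦
          (walkTree step out c s).eval x != (walkTree step out c s').eval x) ≤
            𝔼 b, 𝔼 b', V (step s b) (step s' b') := by
        rw [uniformProb_eval_walkTree_bne_succ hc hs, mul_expect]
        simp only [mul_expect]
        exact expect_le_expect fun b _ ↦ expect_le_expect fun b' _ ↦ ih (tail_injective2 hc) _ _
      push_cast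
      linarith [hstep s s' hs]

end WalkTree

section Shift

/-- The step of the walk: it prepends a bit and drops the last one, which makes the walk one in the
de Bruijn graph on bit strings of length `k + 1`. -/
def shift {k : ℕ} (s : Fin (k + 1) → Bool) (b : Bool) : Fin (k + 1) → Bool :=
  Fin.cons b (Fin.init s)

theorem shift_zero {k : ℕ} (s : Fin (k + 1) → Bool) (b : Bool) : shift s b 0 = b := rfl

theorem expect_shift {k : ℕ} (F : (Fin (k + 1) → Bool) → ℝ) :
    𝔼 s, 𝔼 b, F (shift s b) = 𝔼 s, F s := by
  have drop_last : 𝔼 s : Fin (k + 1) → Bool, 𝔼 b, F (Fin.cons b (Fin.init s)) =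
      𝔼 p : Bool × (Fin k → Bool), 𝔼 b, F (Fin.cons b p.2) :=
    (Fintype.expect_equiv (Fin.snocEquiv fun _ ↦ Bool) _ _ fun p ↦ by simp [Fin.snocEquiv]).symm
  have cons_head : 𝔼 p : Bool × (Fin k → Bool), F (Fin.cons p.1 p.2) = 𝔼 s, F s :=
    Fintype.expect_equiv (Fin.consEquiv fun _ ↦ Bool) _ _ fun p ↦ rfl
  simp only [shift]
  rw [drop_last, ← cons_head, ← univ_product_univ, expect_product, expect_product]
  simp only [Fintype.expect_const]
  exact expect_comm ..

/-- The length of the longest common prefix of two strings. -/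
def commonPrefixLength {K : ℕ} (s s' : Fin K → Bool) : ℕ :=
  Nat.findGreatest (fun r ↦ ∀ i : Fin K, i < r → s i = s' i) K

theorem commonPrefixLength_le {K : ℕ} (s s' : Fin K → Bool) : commonPrefixLength s s' ≤ K :=
  Nat.findGreatest_le K

theorem eq_of_lt_commonPrefixLength {K : ℕ} {s s' : Fin K → Bool} {i : Fin K}
    (hi : i < commonPrefixLength s s') : s i = s' i :=
  Nat.findGreatest_spec (P := fun r ↦ ∀ i : Fin K, i < r → s i = s' i) (Nat.zero_le K)
    (fun _ h ↦ absurd h (Nat.not_lt_zero _)) i hi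

theorem commonPrefixLength_lt {K : ℕ} {s s' : Fin K → Bool} (hs : s ≠ s') :
    commonPrefixLength s s' < K :=
  (commonPrefixLength_le s s').lt_of_ne fun h ↦
    hs (funext fun i ↦ eq_of_lt_commonPrefixLength (i.isLt.trans_eq h.symm))

theorem succ_commonPrefixLength_le_shift {k : ℕ} {s s' : Fin (k + 1) → Bool} (hs : s ≠ s')
    (b : Bool) : commonPrefixLength s s' + 1 ≤ commonPrefixLength (shift s b) (shift s' b) := by
  refine Nat.le_findGreatest (commonPrefixLength_lt hs) (Fin.cases (fun _ ↦ rfl) fun i hi ↦ ?_)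
  exact eq_of_lt_commonPrefixLength (i := i.castSucc) (by simpa using hi)

/-- The expected number of fair coin flips until two strings of length `K` to which the flips are
prepended agree, each string having its own coin: from a common prefix of length `r < K`, one flip
leads with equal probability to `r + 1` or to `0`, and `2 * (2 ^ K - 2 ^ r)` solves the
resulting recursion with value `0` at `r = K`. -/
noncomputable def coalescenceTime {K : ℕ} (s s' : Fin K → Bool) : ℝ :=
  2 * (2 ^ K - 2 ^ commonPrefixLength s s')

theorem coalescenceTime_nonneg {K : ℕ} (s s' : Fin K → Bool) : 0 ≤ coalescenceTime s s' :=
  mul_nonneg zero_le_two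
    (sub_nonneg.2 (pow_le_pow_right₀ one_le_two (commonPrefixLength_le s s')))

theorem coalescenceTime_le {K : ℕ} {s s' : Fin K → Bool} {r : ℕ}
    (hr : r ≤ commonPrefixLength s s') : coalescenceTime s s' ≤ 2 * (2 ^ K - 2 ^ r) := by
  unfold coalescenceTime
  gcongr
  exact one_le_two

theorem one_add_expect_coalescenceTime_shift_le {k : ℕ} {s s' : Fin (k + 1) → Bool}
    (hs : s ≠ s') :
    1 + 𝔼 b, 𝔼 b', coalescenceTime (shift s b) (shift s' b') ≤ coalescenceTime s s' := by
  have agree (b : Bool) := coalescenceTime_le (succ_commonPrefixLength_le_shift hs b)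
  have differ (b b' : Bool) :=
    coalescenceTime_le (Nat.zero_le (commonPrefixLength (shift s b) (shift s' b')))
  simp only [expect_bool]
  rw [coalescenceTime.eq_def s s']
  linarith [agree false, agree true, differ false true, differ true false,
    pow_succ (2 : ℝ) (commonPrefixLength s s')]

end Shift

theorem exists_balanced_readProb_le {L : ℕ} (hL : L ≠ 0) (k : ℕ) :
    ∃ (f : (Fin (L * 2 ^ (k + 1)) → Bool) → Bool) (A : RandAlg (L * 2 ^ (k + 1))),
      balanced f ∧ errProb A f ≤ 2 * 2 ^ (k + 1) / L ∧ ∀ i, readProb A i ≤ 1 / 2 ^ (k + 1) := by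
  let cell : Fin L × (Fin (k + 1) → Bool) ≃ Fin (L * 2 ^ (k + 1)) :=
    Fintype.equivFinOfCardEq (by simp)
  let T := walkTree shift (· 0) (curry cell)
  have hcell : Injective2 (curry cell) := fun _ _ _ _ h ↦ Prod.ext_iff.1 (cell.injective h)
  refine ⟨(T fun _ ↦ false).eval, .uniform T, balanced_of_uniformProb_eq_half ?_, ?_, fun i ↦ ?_⟩
  · obtain ⟨L, rfl⟩ := Nat.exists_eq_succ_of_ne_zero hL
    exact uniformProb_eval_walkTree shift_zero hcell _
  · rw [errProb_uniform]
    refine expect_le univ_nonempty fun s _ ↦ (le_div_iff₀' (by positivity)).2 ?_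
    calc _ ≤ coalescenceTime s fun _ ↦ false :=
          mul_uniformProb_eval_walkTree_bne_le coalescenceTime_nonneg
            (fun _ _ ↦ one_add_expect_coalescenceTime_shift_le) hcell _ _
      _ ≤ 2 * 2 ^ (k + 1) :=
        mul_le_mul_of_nonneg_left (sub_le_self _ (by positivity)) zero_le_two
  · rw [readProb_uniform]
    simpa using expect_uniformProb_readsBit_walkTree_le expect_shift hcell i

/-- For every `ε > 0` there exist a constant `C > 0` and
infinitely many positive integers `n` for which there is a balanced Boolean
function on `n` bits together with a randomized decision-tree algorithm whose
error probability (over a uniform input and its internal randomness) is at most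
`ε` and whose revealment satisfies `δ = max_i δ_i ≤ C · n^(-1/2)`. -/
theorem statement1 :
    ∀ ε > (0 : ℝ), ∃ C > (0 : ℝ), ∀ N : ℕ, ∃ n, N ≤ n ∧ 0 < n ∧
      ∃ (f : (Fin n → Bool) → Bool) (A : RandAlg n),
        balanced f ∧
        errProb A f ≤ ε ∧
        (∀ i, readProb A i ≤ C / Real.sqrt n) := by
  intro ε hε
  obtain ⟨K, hK⟩ := exists_nat_gt (2 / ε)
  have hK_pos : (0 : ℝ) < K := lt_trans (by positivity) hK
  refine ⟨√K, Real.sqrt_pos.2 hK_pos, fun N ↦ ?_⟩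
  have hL : K * 2 ^ (N + 1) ≠ 0 := by
    have : 0 < K := by exact_mod_cast hK_pos
    positivity
  obtain ⟨f, A, hf, hA, hread⟩ := exists_balanced_readProb_le hL N
  have hN : N ≤ 2 ^ (N + 1) := (Nat.lt_two_pow_self.trans (Nat.pow_lt_pow_succ one_lt_two)).le
  refine ⟨K * 2 ^ (N + 1) * 2 ^ (N + 1), hN.trans (Nat.le_mul_of_pos_left _ hL.bot_lt),
    by positivity, f, A, hf, hA.trans ?_, fun i ↦ (hread i).trans_eq ?_⟩
  · push_cast
    rw [mul_div_mul_right _ _ (by positivity)]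
    exact ((div_lt_comm₀ hε hK_pos).1 hK).le
  · have hsqrt : √((K * 2 ^ (N + 1) * 2 ^ (N + 1) : ℕ) : ℝ) = √K * 2 ^ (N + 1) := by
      push_cast
      rw [mul_assoc, Real.sqrt_mul hK_pos.le, Real.sqrt_mul_self (by positivity)]
    rw [hsqrt, div_mul_cancel_left₀ (Real.sqrt_pos.2 hK_pos).ne', one_div]
end

section
/- There exist a constant C > 0 and infinitely many positive integers n for which there is a balanced monotone Boolean function f : {0,1}^n → {0,1} (monotone means f(x) ≥ f(y) whenever x_i ≥ y_i for all i; balanced means Pr[f(x)=1] = 1/2 for uniform x) together with a randomized decision-tree algorithm that on every input outputs f(x) with probability 1, and whose revealment satisfies δ = max_i δ_i ≤ C · n^{-1/3} · log n. -/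
/-!
The basic function lives on the bits of a cylinder `ZMod m × Fin w`: a walk on heights, reflected
at `0`, moves around the cylinder, the bit at its current site decides whether it goes up or down,
and the function tells whether the walk ever reaches height `w`. It is monotone, because two walks
of the same parity cannot cross. Whoever follows the walk may reject at its first return to a
visited site, since it only repeats itself from there on. Until then all bits read are fresh fair
coins, so the expected number of bits read in each row is at most `2 * w`, and starting from a
random column the revealment is at most `2 * w / m`.

The probability `p` of reaching height `w` is at most `1 / 4 + 2 * m / w ^ 2`, and raising `w` by
`1` at most halves it. Hence some `w` of order at most `√m` gives `1 / 4 ≤ p ≤ 1 / 2`, with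
revealment of order `m ^ (-1 / 2)` on at most about `m ^ (3 / 2)` bits.

Exact balance comes from the majority of this function `g`, its Boolean dual, and a balanced
monotone function `b` built in the same way for a smaller `m`, each on its own block of bits. The
first two disagree, so that `b` has to be consulted, with probability `p ^ 2 + (1 - p) ^ 2 ≤ 5 / 8`.
When `m` doubles, the revealment may shrink by the factor `1 / √2`; as `5 / 8 < 1 / √2`, the bits of
`b` stay within the bound.
-/

namespace LowRevealment

open Finset
open scoped BigOperators

section Probability

variable {Ω Ω' : Type*} [Fintype Ω] [Fintype Ω']

lemma expect_comp_fst [Nonempty Ω'] (φ : Ω → ℝ) : 𝔼 ω : Ω × Ω', φ ω.1 = 𝔼 ω, φ ω := by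
  rw [← univ_product_univ, expect_product]
  simp only [Fintype.expect_const]

lemma expect_comp_snd [Nonempty Ω] (φ : Ω' → ℝ) : 𝔼 ω : Ω × Ω', φ ω.2 = 𝔼 ω, φ ω := by
  rw [← univ_product_univ, expect_product]
  simp only [Fintype.expect_const]

open scoped Classical in
/-- The probability of the event `p` for a uniformly random point of the finite type `Ω`. -/
noncomputable def prob (p : Ω → Prop) : ℝ := 𝔼 ω, if p ω then 1 else 0

lemma prob_nonneg (p : Ω → Prop) : 0 ≤ prob p :=
  expect_nonneg fun ω _ ↦ by split_ifs <;> norm_num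

lemma prob_le_one (p : Ω → Prop) : prob p ≤ 1 := by
  classical
  calc prob p ≤ 𝔼 _ω : Ω, (1 : ℝ) := expect_le_expect fun ω _ ↦ by split_ifs <;> norm_num
    _ ≤ 1 := by
      rw [Fintype.expect_eq_sum_div_card]
      simpa using div_self_le_one (Fintype.card Ω : ℝ)

lemma prob_const [Nonempty Ω] (P : Prop) [Decidable P] :
    prob (fun _ : Ω ↦ P) = if P then 1 else 0 := by
  simp only [prob, Fintype.expect_const]
  congr

lemma prob_comp_equiv (e : Ω ≃ Ω') (p : Ω' → Prop) : prob (fun ω ↦ p (e ω)) = prob p :=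
  Fintype.expect_equiv e _ _ fun _ ↦ rfl

lemma prob_or_of_disjoint {p q : Ω → Prop} (h : ∀ ω, p ω → ¬ q ω) :
    prob (fun ω ↦ p ω ∨ q ω) = prob p + prob q := by
  rw [prob, prob, prob, ← expect_add_distrib]
  refine expect_congr rfl fun ω _ ↦ ?_
  by_cases hp : p ω <;> by_cases hq : q ω <;> simp_all

lemma prob_not [Nonempty Ω] (p : Ω → Prop) : prob (fun ω ↦ ¬ p ω) = 1 - prob p := by
  have h := prob_or_of_disjoint (p := p) (q := fun ω ↦ ¬ p ω) fun _ hp hn ↦ hn hp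
  simp only [em, prob_const, if_true] at h
  linarith

lemma prob_and_prod (p : Ω → Prop) (q : Ω' → Prop) :
    prob (fun ω : Ω × Ω' ↦ p ω.1 ∧ q ω.2) = prob p * prob q := by
  rw [prob, prob, prob, expect_mul_expect, ← univ_product_univ, expect_product]
  refine expect_congr rfl fun ω _ ↦ expect_congr rfl fun ω' _ ↦ ?_
  split_ifs <;> simp_all

lemma prob_eq_card_div (p : Ω → Prop) :
    prob p = Nat.card {ω // p ω} / Fintype.card Ω := by
  classical
  rw [prob, Fintype.expect_eq_sum_div_card, Nat.card_eq_fintype_card, Fintype.card_subtype]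
  simp

end Probability

section Cube

variable {ι κ : Type*} [Fintype ι] [DecidableEq ι] [Fintype κ] [DecidableEq κ]

lemma prob_comp_reindex (e : ι ≃ κ) (p : (ι → Bool) → Prop) :
    prob (fun x : κ → Bool ↦ p (x ∘ e)) = prob p :=
  prob_comp_equiv (Equiv.arrowCongr e (Equiv.refl Bool)).symm p

lemma prob_comp_compl (p : (ι → Bool) → Prop) : prob (fun x ↦ p xᶜ) = prob p :=
  prob_comp_equiv (Function.Involutive.toPerm compl compl_involutive) p

lemma prob_and_sum (p : (ι → Bool) → Prop) (q : (κ → Bool) → Prop) :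
    prob (fun x : ι ⊕ κ → Bool ↦ p (x ∘ Sum.inl) ∧ q (x ∘ Sum.inr)) = prob p * prob q := by
  rw [← prob_and_prod]
  exact prob_comp_equiv (Equiv.sumArrowEquivProdArrow ι κ Bool) fun ω ↦ p ω.1 ∧ q ω.2

lemma prob_comp_inl (p : (ι → Bool) → Prop) :
    prob (fun x : ι ⊕ κ → Bool ↦ p (x ∘ Sum.inl)) = prob p := by
  simpa [prob_const] using prob_and_sum (κ := κ) p fun _ ↦ True

lemma prob_comp_inr (q : (κ → Bool) → Prop) :
    prob (fun x : ι ⊕ κ → Bool ↦ q (x ∘ Sum.inr)) = prob q := by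
  simpa [prob_const] using prob_and_sum (ι := ι) (fun _ ↦ True) q

lemma prob_coord_and {i : ι} {p : (ι → Bool) → Prop} (hp : DependsOn p {i}ᶜ) (b : Bool) :
    prob (fun x ↦ x i = b ∧ p x) = prob p / 2 := by
  have update_invariant (x : ι → Bool) (c : Bool) : p (Function.update x i c) = p x :=
    hp fun j hj ↦ Function.update_of_ne hj c x
  let flip : Equiv.Perm (ι → Bool) :=
    Function.Involutive.toPerm (fun x ↦ Function.update x i (!x i)) fun x ↦ by simp
  have flipped : prob (fun x ↦ x i = !b ∧ p x) = prob (fun x ↦ x i = b ∧ p x) := by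
    rw [← prob_comp_equiv flip]
    change prob (fun x ↦ Function.update x i (!x i) i = !b ∧ p (Function.update x i (!x i))) = _
    simp [update_invariant]
  have split : prob p = prob (fun x ↦ x i = b ∧ p x) + prob (fun x ↦ x i = !b ∧ p x) := by
    rw [← prob_or_of_disjoint fun x h h' ↦ by simp [h.1] at h']
    congr 1 with x
    cases x i <;> cases b <;> simp
  linarith

lemma prob_ite_coord {i : ι} {p q : (ι → Bool) → Prop} (hp : DependsOn p {i}ᶜ)
    (hq : DependsOn q {i}ᶜ) :
    prob (fun x ↦ if x i then q x else p x) = (prob p + prob q) / 2 := by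
  rw [add_div, ← prob_coord_and hp false, ← prob_coord_and hq true, ← prob_or_of_disjoint]
  · congr 1 with x
    cases x i <;> simp
  · intro x h h'
    simp [h.1] at h'

end Cube

/-- A deterministic decision tree whose queries are indexed by an arbitrary type `ι`; unlike
`DTree`, it can query sums and products of index types directly. -/
inductive QueryTree (ι : Type*)
  | leaf : Bool → QueryTree ι
  | node : ι → QueryTree ι → QueryTree ι → QueryTree ι

namespace QueryTree

variable {ι κ : Type*}

/-- The output of a query tree on the input `x`. -/
def eval : QueryTree ι → (ι → Bool) → Bool
  | leaf b, _ => b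
  | node i t₀ t₁, x => if x i then t₁.eval x else t₀.eval x

/-- The set of bits that a query tree reads on the input `x`. -/
def reads : QueryTree ι → (ι → Bool) → Set ι
  | leaf _, _ => ∅
  | node i t₀ t₁, x => insert i (if x i then t₁.reads x else t₀.reads x)

/-- The set of bits that a query tree queries at some node. -/
def support : QueryTree ι → Set ι
  | leaf _ => ∅
  | node i t₀ t₁ => insert i (t₀.support ∪ t₁.support)

/-- No branch queries the same bit twice, so on a uniformly random input every answer along a
branch is a fresh fair coin. -/
def ReadOnce : QueryTree ι → Prop
  | leaf _ => True
  | node i t₀ t₁ => i ∉ t₀.support ∧ i ∉ t₁.support ∧ t₀.ReadOnce ∧ t₁.ReadOnce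

/-- The expected gain when the answers are independent fair coins, reading the bit `i` earns `c i`
and the output `b` earns `d b`. -/
noncomputable def value (c : ι → ℝ) (d : Bool → ℝ) : QueryTree ι → ℝ
  | leaf b => d b
  | node i t₀ t₁ => c i + (t₀.value c d + t₁.value c d) / 2

/-- The probability of the output `true` when the answers are independent fair coins. -/
noncomputable def acceptProb (t : QueryTree ι) : ℝ := t.value 0 fun b ↦ if b then 1 else 0

/-- Relabel the queried bits along `e`. -/
def map (e : ι → κ) : QueryTree ι → QueryTree κ
  | leaf b => leaf b
  | node i t₀ t₁ => node (e i) (t₀.map e) (t₁.map e)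

/-- The dual tree, which computes `x ↦ (f xᶜ)ᶜ` when the given tree computes `f`. -/
def dual : QueryTree ι → QueryTree ι
  | leaf b => leaf (!b)
  | node i t₀ t₁ => node i t₁.dual t₀.dual

/-- Run a tree and continue with a tree chosen according to its output. -/
def bind : QueryTree ι → (Bool → QueryTree ι) → QueryTree ι
  | leaf b, k => k b
  | node i t₀ t₁, k => node i (t₀.bind k) (t₁.bind k)

lemma eval_map (e : ι → κ) (t : QueryTree ι) (x : κ → Bool) :
    (t.map e).eval x = t.eval (x ∘ e) := by
  induction t with
  | leaf => rfl
  | node i t₀ t₁ ih₀ ih₁ => simp only [map, eval, ih₀, ih₁, Function.comp_apply]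

lemma reads_map (e : ι → κ) (t : QueryTree ι) (x : κ → Bool) :
    (t.map e).reads x = e '' t.reads (x ∘ e) := by
  induction t with
  | leaf => exact (Set.image_empty e).symm
  | node i t₀ t₁ ih₀ ih₁ =>
    cases h : x (e i) <;> simp [map, reads, ih₀, ih₁, h, Set.image_insert_eq]

lemma eval_dual (t : QueryTree ι) (x : ι → Bool) : t.dual.eval x = !t.eval xᶜ := by
  induction t with
  | leaf => rfl
  | node i t₀ t₁ ih₀ ih₁ => cases h : x i <;> simp [dual, eval, ih₀, ih₁, h]

lemma reads_dual (t : QueryTree ι) (x : ι → Bool) : t.dual.reads x = t.reads xᶜ := by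
  induction t with
  | leaf => rfl
  | node i t₀ t₁ ih₀ ih₁ => cases h : x i <;> simp [dual, reads, ih₀, ih₁, h]

lemma eval_bind (t : QueryTree ι) (k : Bool → QueryTree ι) (x : ι → Bool) :
    (t.bind k).eval x = (k (t.eval x)).eval x := by
  induction t with
  | leaf => rfl
  | node i t₀ t₁ ih₀ ih₁ => cases h : x i <;> simp [bind, eval, ih₀, ih₁, h]

lemma reads_bind (t : QueryTree ι) (k : Bool → QueryTree ι) (x : ι → Bool) :
    (t.bind k).reads x = t.reads x ∪ (k (t.eval x)).reads x := by
  induction t with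
  | leaf => exact (Set.empty_union _).symm
  | node i t₀ t₁ ih₀ ih₁ =>
    cases h : x i <;> simp [bind, reads, eval, ih₀, ih₁, h, Set.insert_union]

lemma dependsOn_eval (t : QueryTree ι) : DependsOn t.eval t.support := by
  induction t with
  | leaf => exact fun _ _ _ ↦ rfl
  | node i t₀ t₁ ih₀ ih₁ =>
    intro x y h
    simp only [eval, h i (Set.mem_insert _ _), ih₀ fun j hj ↦ h j (.inr (.inl hj)),
      ih₁ fun j hj ↦ h j (.inr (.inr hj))]

lemma dependsOn_reads (t : QueryTree ι) : DependsOn t.reads t.support := by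
  induction t with
  | leaf => exact fun _ _ _ ↦ rfl
  | node i t₀ t₁ ih₀ ih₁ =>
    intro x y h
    simp only [reads, h i (Set.mem_insert _ _), ih₀ fun j hj ↦ h j (.inr (.inl hj)),
      ih₁ fun j hj ↦ h j (.inr (.inr hj))]

lemma reads_subset_support (t : QueryTree ι) (x : ι → Bool) : t.reads x ⊆ t.support := by
  induction t with
  | leaf => exact Set.empty_subset _
  | node i t₀ t₁ ih₀ ih₁ =>
    refine Set.insert_subset_insert ?_
    split_ifs
    exacts [Set.subset_union_of_subset_right ih₁ _, Set.subset_union_of_subset_left ih₀ _]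

lemma acceptProb_leaf (b : Bool) : (leaf b : QueryTree ι).acceptProb = if b then 1 else 0 := rfl

lemma acceptProb_node (i : ι) (t₀ t₁ : QueryTree ι) :
    (node i t₀ t₁).acceptProb = (t₀.acceptProb + t₁.acceptProb) / 2 := zero_add _

lemma acceptProb_nonneg (t : QueryTree ι) : 0 ≤ t.acceptProb := by
  induction t with
  | leaf b => rw [acceptProb_leaf]; split_ifs <;> norm_num
  | node i t₀ t₁ ih₀ ih₁ => rw [acceptProb_node]; positivity

section Uniform

variable [Fintype ι] [DecidableEq ι] [Fintype κ] [DecidableEq κ]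

lemma prob_eval_eq_acceptProb {t : QueryTree ι} (ht : t.ReadOnce) :
    prob (fun x ↦ t.eval x = true) = t.acceptProb := by
  induction t with
  | leaf => simp only [eval, prob_const, acceptProb_leaf]
  | node i t₀ t₁ ih₀ ih₁ =>
    obtain ⟨hi₀, hi₁, ht₀, ht₁⟩ := ht
    have depends {t : QueryTree ι} (hi : i ∉ t.support) :
        DependsOn (fun x ↦ t.eval x = true) {i}ᶜ := fun x y h ↦
      congrArg (· = true) (t.dependsOn_eval.mono (Set.subset_compl_singleton_iff.2 hi) h)
    rw [acceptProb_node, ← ih₀ ht₀, ← ih₁ ht₁, ← prob_ite_coord (depends hi₀) (depends hi₁)]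
    congr 1 with x
    cases h : x i <;> simp [eval, h]

lemma prob_mem_reads_node {i : ι} {t₀ t₁ : QueryTree ι} (hi₀ : i ∉ t₀.support)
    (hi₁ : i ∉ t₁.support) (j : ι) :
    prob (fun x ↦ j ∈ (node i t₀ t₁).reads x) = (if j = i then 1 else 0) +
      (prob (fun x ↦ j ∈ t₀.reads x) + prob (fun x ↦ j ∈ t₁.reads x)) / 2 := by
  have depends {t : QueryTree ι} (hi : i ∉ t.support) :
      DependsOn (fun x ↦ j ∈ t.reads x) {i}ᶜ := fun x y h ↦
    congrArg (j ∈ ·) (t.dependsOn_reads.mono (Set.subset_compl_singleton_iff.2 hi) h)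
  rw [← prob_const (Ω := ι → Bool), ← prob_ite_coord (depends hi₀) (depends hi₁),
    ← prob_or_of_disjoint]
  · congr 1 with x
    cases h : x i <;> simp [reads, h]
  · rintro x rfl
    split_ifs
    exacts [fun h ↦ hi₁ (t₁.reads_subset_support x h), fun h ↦ hi₀ (t₀.reads_subset_support x h)]

lemma sum_mul_prob_mem_reads {t : QueryTree ι} (ht : t.ReadOnce) (c : ι → ℝ) :
    ∑ i, c i * prob (fun x ↦ i ∈ t.reads x) = t.value c 0 := by
  induction t with
  | leaf => simp [reads, value, prob_const]
  | node i t₀ t₁ ih₀ ih₁ =>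
    obtain ⟨hi₀, hi₁, ht₀, ht₁⟩ := ht
    simp only [prob_mem_reads_node hi₀ hi₁, value, ← ih₀ ht₀, ← ih₁ ht₁, mul_add, add_div,
      sum_add_distrib, sum_div, mul_div_assoc, mul_ite, mul_one, mul_zero, sum_ite_eq', mem_univ,
      if_true]

lemma prob_mem_reads_map (e : ι ≃ κ) (t : QueryTree ι) (k : κ) :
    prob (fun x ↦ k ∈ (t.map e).reads x) = prob fun x ↦ e.symm k ∈ t.reads x := by
  simp only [reads_map, Equiv.image_eq_preimage_symm, Set.mem_preimage]
  exact prob_comp_reindex e fun x ↦ e.symm k ∈ t.reads x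

end Uniform

end QueryTree

section Majority

variable {ι κ μ : Type*}

/-- The Boolean dual of `f`, obtained by complementing the input and the output. -/
def dual (f : (ι → Bool) → Bool) (x : ι → Bool) : Bool := !f xᶜ

/-- The majority of three Boolean functions of disjoint blocks of bits. -/
def majority (f : (ι → Bool) → Bool) (g : (κ → Bool) → Bool) (b : (μ → Bool) → Bool)
    (x : (ι ⊕ κ) ⊕ μ → Bool) : Bool :=
  if f (x ∘ Sum.inl ∘ Sum.inl) = g (x ∘ Sum.inl ∘ Sum.inr) then f (x ∘ Sum.inl ∘ Sum.inl)
  else b (x ∘ Sum.inr)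

lemma monotone_dual {f : (ι → Bool) → Bool} (hf : Monotone f) : Monotone (dual f) :=
  fun _ _ h ↦ compl_le_compl (hf (compl_le_compl h))

lemma monotone_majority {f : (ι → Bool) → Bool} {g : (κ → Bool) → Bool} {b : (μ → Bool) → Bool}
    (hf : Monotone f) (hg : Monotone g) (hb : Monotone b) : Monotone (majority f g b) := by
  intro x y h
  have hf' := hf fun i ↦ h (.inl (.inl i))
  have hg' := hg fun i ↦ h (.inl (.inr i))
  have hb' := hb fun i ↦ h (.inr i)
  simp only [majority, Function.comp_def]
  grind [Bool.le_iff_imp]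

/-- Evaluate the majority of three functions, consulting the third only if the first two differ. -/
def QueryTree.majority (t : QueryTree ι) (t' : QueryTree κ) (t'' : QueryTree μ) :
    QueryTree ((ι ⊕ κ) ⊕ μ) :=
  (t.map (Sum.inl ∘ Sum.inl)).bind fun u ↦ (t'.map (Sum.inl ∘ Sum.inr)).bind fun v ↦
    if u = v then leaf u else t''.map Sum.inr

lemma QueryTree.eval_majority (t : QueryTree ι) (t' : QueryTree κ) (t'' : QueryTree μ) :
    (t.majority t' t'').eval = LowRevealment.majority t.eval t'.eval t''.eval := by
  funext x
  simp only [QueryTree.majority, LowRevealment.majority, eval_bind, eval_map]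
  split_ifs
  exacts [rfl, eval_map _ _ _]

lemma QueryTree.reads_majority (t : QueryTree ι) (t' : QueryTree κ) (t'' : QueryTree μ)
    (x : (ι ⊕ κ) ⊕ μ → Bool) :
    (t.majority t' t'').reads x = Sum.inl '' (Sum.inl '' t.reads (x ∘ Sum.inl ∘ Sum.inl)) ∪
      (Sum.inl '' (Sum.inr '' t'.reads (x ∘ Sum.inl ∘ Sum.inr)) ∪
        Sum.inr '' {k | t.eval (x ∘ Sum.inl ∘ Sum.inl) ≠ t'.eval (x ∘ Sum.inl ∘ Sum.inr) ∧
          k ∈ t''.reads (x ∘ Sum.inr)}) := by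
  simp only [QueryTree.majority, reads_bind, eval_map, reads_map, Set.image_comp]
  split_ifs with h
  · simp [h, reads]
  · simp [h, reads_map]

variable [Fintype ι] [DecidableEq ι] [Fintype κ] [DecidableEq κ] [Fintype μ] [DecidableEq μ]

lemma prob_dual (f : (ι → Bool) → Bool) :
    prob (fun x ↦ dual f x = true) = 1 - prob fun x ↦ f x = true := by
  rw [← prob_not, ← prob_comp_compl]
  congr 1 with x
  simp [dual]

lemma prob_ne (f : (ι → Bool) → Bool) (g : (κ → Bool) → Bool) :
    prob (fun x : ι ⊕ κ → Bool ↦ f (x ∘ Sum.inl) ≠ g (x ∘ Sum.inr)) =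
      prob (f · = true) * (1 - prob (g · = true)) +
        (1 - prob (f · = true)) * prob (g · = true) := by
  rw [← prob_not, ← prob_not, ← prob_and_sum, ← prob_and_sum, ← prob_or_of_disjoint]
  · congr 1 with x
    cases f (x ∘ Sum.inl) <;> cases g (x ∘ Sum.inr) <;> simp
  · exact fun x h h' ↦ h'.1 h.1

lemma prob_majority (f : (ι → Bool) → Bool) (g : (κ → Bool) → Bool) (b : (μ → Bool) → Bool) :
    prob (majority f g b · = true) = prob (f · = true) * prob (g · = true) +
      prob (fun x : ι ⊕ κ → Bool ↦ f (x ∘ Sum.inl) ≠ g (x ∘ Sum.inr)) * prob (b · = true) := by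
  rw [← prob_and_sum, ← prob_and_sum, ← prob_comp_inl (κ := μ) fun x : ι ⊕ κ → Bool ↦
    f (x ∘ Sum.inl) = true ∧ g (x ∘ Sum.inr) = true, ← prob_or_of_disjoint]
  · congr 1 with x
    simp only [majority, Function.comp_assoc]
    grind
  · exact fun x h h' ↦ h'.1 (h.1.trans h.2.symm)

namespace QueryTree

lemma prob_mem_reads_majority_left (t : QueryTree ι) (t' : QueryTree κ) (t'' : QueryTree μ)
    (i : ι) : prob (fun x ↦ .inl (.inl i) ∈ (t.majority t' t'').reads x) =
      prob fun x ↦ i ∈ t.reads x := by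
  rw [← prob_comp_inl (κ := κ) fun x ↦ i ∈ t.reads x,
    ← prob_comp_inl (κ := μ) fun x : ι ⊕ κ → Bool ↦ i ∈ t.reads (x ∘ Sum.inl)]
  simp [reads_majority, Function.comp_assoc]

lemma prob_mem_reads_majority_middle (t : QueryTree ι) (t' : QueryTree κ) (t'' : QueryTree μ)
    (j : κ) : prob (fun x ↦ .inl (.inr j) ∈ (t.majority t' t'').reads x) =
      prob fun x ↦ j ∈ t'.reads x := by
  rw [← prob_comp_inr (ι := ι) fun x ↦ j ∈ t'.reads x,
    ← prob_comp_inl (κ := μ) fun x : ι ⊕ κ → Bool ↦ j ∈ t'.reads (x ∘ Sum.inr)]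
  simp [reads_majority, Function.comp_assoc]

lemma prob_mem_reads_majority_right (t : QueryTree ι) (t' : QueryTree κ) (t'' : QueryTree μ)
    (k : μ) : prob (fun x ↦ .inr k ∈ (t.majority t' t'').reads x) =
      prob (fun x : ι ⊕ κ → Bool ↦ t.eval (x ∘ Sum.inl) ≠ t'.eval (x ∘ Sum.inr)) *
        prob fun x ↦ k ∈ t''.reads x := by
  rw [← prob_and_sum]
  simp [reads_majority, Function.comp_assoc]

end QueryTree

end Majority

section Evaluation

variable {ι κ μ : Type*} [Fintype ι] [DecidableEq ι] [Fintype κ] [DecidableEq κ] [Fintype μ]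
  [DecidableEq μ]

/-- `EvaluableWithin f δ` says that `f` is computed without error by a randomized algorithm of
revealment at most `δ`. The algorithm is encoded as a uniformly random member of a finite family of
query trees. -/
def EvaluableWithin (f : (ι → Bool) → Bool) (δ : ℝ) : Prop :=
  ∃ (R : Type) (_ : Fintype R) (_ : Nonempty R) (t : R → QueryTree ι),
    (∀ r x, (t r).eval x = f x) ∧ ∀ i, 𝔼 r, prob (fun x ↦ i ∈ (t r).reads x) ≤ δ

namespace EvaluableWithin

lemma mono {f : (ι → Bool) → Bool} {δ δ' : ℝ} (hf : EvaluableWithin f δ) (h : δ ≤ δ') :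
    EvaluableWithin f δ' := by
  obtain ⟨R, _, _, t, heval, hreads⟩ := hf
  exact ⟨R, inferInstance, inferInstance, t, heval, fun i ↦ (hreads i).trans h⟩

lemma dual {f : (ι → Bool) → Bool} {δ : ℝ} (hf : EvaluableWithin f δ) :
    EvaluableWithin (dual f) δ := by
  obtain ⟨R, _, _, t, heval, hreads⟩ := hf
  refine ⟨R, inferInstance, inferInstance, fun r ↦ (t r).dual, fun r x ↦ ?_, fun i ↦ ?_⟩
  · rw [QueryTree.eval_dual, heval, LowRevealment.dual]
  · simp only [QueryTree.reads_dual]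
    exact (expect_congr rfl fun r _ ↦ prob_comp_compl fun x ↦ i ∈ (t r).reads x).trans_le (hreads i)

lemma reindex {f : (ι → Bool) → Bool} {δ : ℝ} (hf : EvaluableWithin f δ) (e : ι ≃ κ) :
    EvaluableWithin (fun x : κ → Bool ↦ f (x ∘ e)) δ := by
  obtain ⟨R, _, _, t, heval, hreads⟩ := hf
  refine ⟨R, inferInstance, inferInstance, fun r ↦ (t r).map e, fun r x ↦ ?_, fun i ↦ ?_⟩
  · rw [QueryTree.eval_map, heval]
  · simpa only [QueryTree.prob_mem_reads_map] using hreads (e.symm i)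

lemma of_symmetries {R : Type} [Fintype R] [Nonempty R] {t : QueryTree ι} {δ : ℝ}
    (e : R → Equiv.Perm ι) (symm : ∀ r x, t.eval (x ∘ e r) = t.eval x)
    (hreads : ∀ i, 𝔼 r, prob (fun x ↦ (e r).symm i ∈ t.reads x) ≤ δ) :
    EvaluableWithin t.eval δ := by
  refine ⟨R, inferInstance, inferInstance, fun r ↦ t.map (e r), fun r x ↦ ?_, fun i ↦ ?_⟩
  · rw [QueryTree.eval_map, symm]
  · simpa only [QueryTree.prob_mem_reads_map] using hreads i

lemma majority {f : (ι → Bool) → Bool} {g : (κ → Bool) → Bool} {b : (μ → Bool) → Bool} {δ δ' : ℝ}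
    (hf : EvaluableWithin f δ) (hg : EvaluableWithin g δ) (hb : EvaluableWithin b δ')
    (h : prob (fun x : ι ⊕ κ → Bool ↦ f (x ∘ Sum.inl) ≠ g (x ∘ Sum.inr)) * δ' ≤ δ) :
    EvaluableWithin (majority f g b) δ := by
  obtain ⟨R, _, _, t, heval, hreads⟩ := hf
  obtain ⟨R', _, _, t', heval', hreads'⟩ := hg
  obtain ⟨R'', _, _, t'', heval'', hreads''⟩ := hb
  refine ⟨(R × R') × R'', instFintypeProd _ _, inferInstance,
    fun r ↦ (t r.1.1).majority (t' r.1.2) (t'' r.2), fun r x ↦ ?_, ?_⟩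
  · rw [QueryTree.eval_majority, funext (heval _), funext (heval' _), funext (heval'' _)]
  rintro ((i | j) | k)
  · simp only [QueryTree.prob_mem_reads_majority_left]
    rw [expect_comp_fst fun r : R × R' ↦ prob fun x ↦ i ∈ (t r.1).reads x,
      expect_comp_fst fun r ↦ prob fun x ↦ i ∈ (t r).reads x]
    exact hreads i
  · simp only [QueryTree.prob_mem_reads_majority_middle]
    rw [expect_comp_fst fun r : R × R' ↦ prob fun x ↦ j ∈ (t' r.2).reads x,
      expect_comp_snd fun r ↦ prob fun x ↦ j ∈ (t' r).reads x]
    exact hreads' j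
  · simp only [QueryTree.prob_mem_reads_majority_right, heval, heval', ← mul_expect]
    rw [expect_comp_snd fun r ↦ prob fun x ↦ k ∈ (t'' r).reads x]
    exact (mul_le_mul_of_nonneg_left (hreads'' k) (prob_nonneg _)).trans h

end EvaluableWithin

/-- The induction hypothesis of the construction: a balanced monotone function which is computed
without error with revealment at most `δ`. -/
structure Admissible (f : (ι → Bool) → Bool) (δ : ℝ) : Prop where
  monotone : Monotone f
  prob_eq_half : prob (f · = true) = 1 / 2
  evaluable : EvaluableWithin f δ

namespace Admissible

lemma coord (i : ι) : Admissible (fun x ↦ x i) 1 where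
  monotone _ _ h := h i
  prob_eq_half := by
    simpa [prob_const] using prob_coord_and (i := i) (p := fun _ ↦ True) (fun _ _ _ ↦ rfl) true
  evaluable := by
    refine ⟨Unit, inferInstance, inferInstance, fun _ ↦ .node i (.leaf false) (.leaf true),
      fun _ x ↦ ?_, fun j ↦ ?_⟩
    · simp [QueryTree.eval]
    · rw [Fintype.expect_const]
      exact prob_le_one _

lemma mono {f : (ι → Bool) → Bool} {δ δ' : ℝ} (hf : Admissible f δ) (h : δ ≤ δ') :
    Admissible f δ' :=
  ⟨hf.monotone, hf.prob_eq_half, hf.evaluable.mono h⟩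

lemma reindex {f : (ι → Bool) → Bool} {δ : ℝ} (hf : Admissible f δ) (e : ι ≃ κ) :
    Admissible (fun x : κ → Bool ↦ f (x ∘ e)) δ where
  monotone _ _ h := hf.monotone fun i ↦ h (e i)
  prob_eq_half := (prob_comp_reindex e (f · = true)).trans hf.prob_eq_half
  evaluable := hf.evaluable.reindex e

lemma majority_dual {g : (ι → Bool) → Bool} {b : (κ → Bool) → Bool} {p δ δ' : ℝ}
    (hg : Monotone g) (hg' : EvaluableWithin g δ) (hp : prob (g · = true) = p)
    (hb : Admissible b δ') (h : (p ^ 2 + (1 - p) ^ 2) * δ' ≤ δ) :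
    Admissible (majority g (dual g) b) δ := by
  have ne : prob (fun x : ι ⊕ ι → Bool ↦ g (x ∘ Sum.inl) ≠ dual g (x ∘ Sum.inr)) =
      p ^ 2 + (1 - p) ^ 2 := by
    rw [prob_ne, prob_dual, hp]
    ring
  refine ⟨monotone_majority hg (monotone_dual hg) hb.monotone, ?_,
    hg'.majority hg'.dual hb.evaluable (ne ▸ h)⟩
  rw [prob_majority, ne, prob_dual, hp, hb.prob_eq_half]
  ring

end Admissible

end Evaluation

section RandAlg

variable {n : ℕ}

namespace QueryTree

/-- The decision tree on `n` bits that performs the same queries. -/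
def toDTree : QueryTree (Fin n) → DTree n
  | leaf b => .leaf b
  | node i t₀ t₁ => .node i t₀.toDTree t₁.toDTree

lemma eval_toDTree (t : QueryTree (Fin n)) (x : Fin n → Bool) : t.toDTree.eval x = t.eval x := by
  induction t with
  | leaf => rfl
  | node i t₀ t₁ ih₀ ih₁ => simp only [toDTree, DTree.eval, eval, ih₀, ih₁]

lemma readsBit_toDTree (t : QueryTree (Fin n)) (x : Fin n → Bool) (j : Fin n) :
    t.toDTree.readsBit x j = true ↔ j ∈ t.reads x := by
  induction t with
  | leaf => simp [toDTree, DTree.readsBit, reads]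
  | node i t₀ t₁ ih₀ ih₁ =>
    cases h : x i <;> simp [toDTree, DTree.readsBit, reads, ih₀, ih₁, h, eq_comm (a := i)]

end QueryTree

/-- The algorithm that runs a uniformly random member of a finite family of query trees. -/
noncomputable def uniformAlg {R : Type*} [Fintype R] [Nonempty R] (t : R → QueryTree (Fin n)) :
    RandAlg n where
  m := Fintype.card R
  tree r := (t ((Fintype.equivFin R).symm r)).toDTree
  w _ := (Fintype.card R : ℝ)⁻¹
  w_nonneg _ := by positivity
  w_sum := by simp

lemma readProb_uniformAlg {R : Type*} [Fintype R] [Nonempty R] (t : R → QueryTree (Fin n))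
    (i : Fin n) :
    readProb (uniformAlg t) i = 𝔼 r, prob (fun x ↦ i ∈ (t r).reads x) := by
  classical
  calc readProb (uniformAlg t) i
      = (∑ r, ∑ x, if (t r).toDTree.readsBit x i then (Fintype.card R : ℝ)⁻¹ else 0) / 2 ^ n :=
        congrArg (· / 2 ^ n) ((Fintype.equivFin R).symm.sum_comp fun r ↦
          ∑ x, if (t r).toDTree.readsBit x i then (Fintype.card R : ℝ)⁻¹ else 0)
    _ = 𝔼 r, prob (fun x ↦ i ∈ (t r).reads x) := by
        simp [prob, Fintype.expect_eq_sum_div_card, QueryTree.readsBit_toDTree, sum_ite,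
          div_eq_mul_inv, ← sum_mul, mul_right_comm]

lemma balanced_of_prob_eq_half {f : (Fin n → Bool) → Bool} (h : prob (f · = true) = 1 / 2) :
    balanced f := by
  rw [prob_eq_card_div, div_eq_div_iff (by positivity) two_ne_zero] at h
  have h' : (Nat.card {x // f x = true} : ℝ) * 2 = 2 ^ n := by simpa using h
  rw [balanced, mul_comm]
  exact_mod_cast h'

lemma Admissible.exists_randAlg {f : (Fin n → Bool) → Bool} {δ : ℝ} (hf : Admissible f δ) :
    balanced f ∧ monotoneBF f ∧ ∃ A : RandAlg n, (∀ r x, (A.tree r).eval x = f x) ∧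
      ∀ i, readProb A i ≤ δ := by
  obtain ⟨R, _, _, t, heval, hreads⟩ := hf.evaluable
  refine ⟨balanced_of_prob_eq_half hf.prob_eq_half, fun _ _ h ↦ hf.monotone h, uniformAlg t,
    fun r x ↦ (QueryTree.eval_toDTree _ _).trans (heval _ _), fun i ↦ ?_⟩
  rw [readProb_uniformAlg]
  exact hreads i

end RandAlg

section Walk

/-- One step of a walk on `ℕ` reflected at `0`, where `b` tells for each height whether the walk
moves up. -/
def step (b : ℕ → Bool) (h : ℕ) : ℕ := if h = 0 then 1 else if b h then h + 1 else h - 1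

/-- The height at time `r` of the reflected walk that starts from `h` and moves up from height `k`
at time `s` if and only if `ω s k = true`. -/
def walk (ω : ℕ → ℕ → Bool) (h : ℕ) : ℕ → ℕ
  | 0 => h
  | r + 1 => step (ω r) (walk ω h r)

variable {ω ω' : ℕ → ℕ → Bool} {c h h' j w : ℕ}

lemma walk_mod_two (ω : ℕ → ℕ → Bool) (h r : ℕ) : walk ω h r % 2 = (h + r) % 2 := by
  induction r with
  | zero => rfl
  | succ r ih =>
    rw [walk, step]
    split_ifs <;> omega

lemma walk_mono (hω : ω ≤ ω') (hh : h ≤ h') (parity : h % 2 = h' % 2) (r : ℕ) :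
    walk ω h r ≤ walk ω' h' r := by
  induction r with
  | zero => exact hh
  | succ r ih =>
    have gap : walk ω h r = walk ω' h' r ∨ walk ω h r + 2 ≤ walk ω' h' r := by
      have := walk_mod_two ω h r
      have := walk_mod_two ω' h' r
      omega
    rw [walk, walk, step, step]
    obtain heq | hlt := gap
    · have := Bool.le_iff_imp.1 (hω r (walk ω' h' r))
      rw [heq]
      grind
    · split_ifs <;> omega

lemma walk_add (ω : ℕ → ℕ → Bool) (h q r : ℕ) :
    walk ω h (q + r) = walk (fun s ↦ ω (q + s)) (walk ω h q) r := by
  induction r with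
  | zero => rfl
  | succ r ih => rw [← add_assoc, walk, walk, ih]

lemma walk_shift_le (hc : Even c) (r : ℕ) : walk (fun s ↦ ω (c + s)) 0 r ≤ walk ω 0 (c + r) := by
  rw [walk_add]
  refine walk_mono le_rfl (Nat.zero_le _) ?_ r
  rw [walk_mod_two, zero_add, Nat.even_iff.1 hc]

lemma walk_lt_of_return (hω : Function.Periodic ω c) (hc : Even c) (hc₀ : 0 < c)
    (hreturn : walk ω h (j + c) ≤ walk ω h j) (hlt : ∀ r ≤ j + c, walk ω h r < w) (r : ℕ) :
    walk ω h r < w := by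
  induction r using Nat.strong_induction_on with
  | _ r ih =>
    obtain hr | hr := le_or_gt r (j + c)
    · exact hlt r hr
    obtain ⟨q, rfl⟩ := Nat.exists_eq_add_of_lt hr
    have same_future : (fun s ↦ ω (j + c + s)) = fun s ↦ ω (j + s) := by
      funext s
      rw [add_right_comm, hω]
    have parity : walk ω h (j + c) % 2 = walk ω h j % 2 := by
      have := Nat.even_iff.1 hc
      simp only [walk_mod_two]
      omega
    calc walk ω h (j + c + (q + 1))
        ≤ walk ω h (j + (q + 1)) := by
          rw [walk_add ω h (j + c) (q + 1), walk_add ω h j (q + 1), same_future]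
          exact walk_mono le_rfl hreturn parity _
      _ < w := ih _ (by omega)

lemma walk_lt_of_forall_le_mul (hω : Function.Periodic ω c) (hc : Even c) (hc₀ : 0 < c)
    (hlt : ∀ r ≤ c * w, walk ω h r < w) (r : ℕ) : walk ω h r < w := by
  by_cases hreturn : ∃ i < w, walk ω h (c * i + c) ≤ walk ω h (c * i)
  · obtain ⟨i, hi, hle⟩ := hreturn
    refine walk_lt_of_return hω hc hc₀ hle (fun r hr ↦ hlt r (hr.trans ?_)) r
    exact Nat.mul_le_mul_left c hi
  · push Not at hreturn
    have climbs (i : ℕ) (hi : i ≤ w) : i ≤ walk ω h (c * i) := by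
      induction i with
      | zero => exact Nat.zero_le _
      | succ i ih => exact (ih (by omega)).trans_lt (hreturn i hi)
    exact absurd (hlt (c * w) le_rfl) (climbs w le_rfl).not_gt

end Walk

section Crossing

variable (m w : ℕ)

/-- The column of the cylinder `ZMod m × Fin w` that supplies the steps at time `s`. A column serves
two consecutive times: since the height of the walk has the parity of the time, no bit is used
twice before the walk has gone around the cylinder. -/
def column (s : ℕ) : ZMod m := (s / 2 : ℕ)

variable {m w} in
/-- The steps of the walk driven by the bits `x`. The value at heights `k ≥ w` is irrelevant, and
`true` makes it monotone in `x`. -/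
def env (x : ZMod m × Fin w → Bool) (s k : ℕ) : Bool :=
  if hk : k < w then x (column m s, ⟨k, hk⟩) else true

open scoped Classical in
/-- The Boolean function of the bits of the cylinder which tells whether the reflected walk from
height `0` ever reaches height `w`. -/
noncomputable def reachesTop (x : ZMod m × Fin w → Bool) : Bool :=
  decide (∃ r, w ≤ walk (env x) 0 r)

/-- The rotation of the cylinder by `a` columns; it leaves the crossing function invariant, so that
a random rotation spreads the reads of an algorithm evenly over each row. -/
def rotate (a : ZMod m) : Equiv.Perm (ZMod m × Fin w) := (Equiv.addRight a).prodCongr (.refl _)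

variable {m w}

lemma column_add_mul (s k : ℕ) : column m (s + 2 * m * k) = column m s := by
  simp [column, mul_assoc, Nat.add_mul_div_left]

lemma reachesTop_eq_true {x : ZMod m × Fin w → Bool} :
    reachesTop m w x = true ↔ ∃ r, w ≤ walk (env x) 0 r := by
  simp [reachesTop]

lemma reachesTop_eq_false {x : ZMod m × Fin w → Bool} :
    reachesTop m w x = false ↔ ∀ r, walk (env x) 0 r < w := by
  simp [reachesTop]

lemma env_mono : Monotone (env : (ZMod m × Fin w → Bool) → ℕ → ℕ → Bool) := by
  intro x y h s k
  unfold env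
  split_ifs
  exacts [h _, le_rfl]

lemma env_periodic (x : ZMod m × Fin w → Bool) (k : ℕ) : (env x).Periodic (2 * m * k) := by
  intro s
  funext h
  simp only [env, column_add_mul]

lemma env_comp_rotate [NeZero m] (x : ZMod m × Fin w → Bool) (a : ZMod m) :
    env (x ∘ rotate m w a) = fun s ↦ env x (2 * a.val + s) := by
  funext s k
  simp [env, rotate, column, add_comm (2 * a.val), Nat.add_mul_div_left]

lemma monotone_reachesTop : Monotone (reachesTop m w) := by
  intro x y h
  rw [Bool.le_iff_imp, reachesTop_eq_true, reachesTop_eq_true]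
  exact fun ⟨r, hr⟩ ↦ ⟨r, hr.trans (walk_mono (env_mono h) le_rfl rfl r)⟩

lemma reachesTop_comp_rotate_le [NeZero m] (x : ZMod m × Fin w → Bool) (a : ZMod m) :
    reachesTop m w (x ∘ rotate m w a) ≤ reachesTop m w x := by
  rw [Bool.le_iff_imp, reachesTop_eq_true, reachesTop_eq_true, env_comp_rotate]
  exact fun ⟨r, hr⟩ ↦ ⟨_, hr.trans (walk_shift_le (even_two_mul a.val) r)⟩

lemma reachesTop_comp_rotate [NeZero m] (x : ZMod m × Fin w → Bool) (a : ZMod m) :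
    reachesTop m w (x ∘ rotate m w a) = reachesTop m w x := by
  refine (reachesTop_comp_rotate_le x a).antisymm ?_
  have rotate_back : (x ∘ rotate m w a) ∘ rotate m w (-a) = x := by
    funext v
    simp [rotate, Prod.map]
  simpa only [rotate_back] using reachesTop_comp_rotate_le (x ∘ rotate m w a) (-a)

open scoped Classical in
/-- Follow the walk from height `h` at time `s` for `fuel` steps, where `visited` holds the sites
queried so far. The walk is certain never to reach `w`, and the search rejects, as soon as it
returns to a site, or to height `0` after going around the cylinder. -/
noncomputable def search (m w : ℕ) :
    ℕ → ℕ → ℕ → Set (ZMod m × ℕ) → QueryTree (ZMod m × Fin w)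
  | 0, _, _, _ => .leaf false
  | fuel + 1, s, h, visited =>
    if hh : h < w then
      if h = 0 then
        if 2 * m ≤ s then .leaf false else search m w fuel (s + 1) 1 visited
      else if (column m s, h) ∈ visited then .leaf false
      else .node (column m s, ⟨h, hh⟩)
        (search m w fuel (s + 1) (h - 1) (insert (column m s, h) visited))
        (search m w fuel (s + 1) (h + 1) (insert (column m s, h) visited))
    else .leaf true

lemma notMem_of_mem_support_search {fuel s h : ℕ} {visited : Set (ZMod m × ℕ)}
    {v : ZMod m × Fin w} (hv : v ∈ (search m w fuel s h visited).support) :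
    (v.1, (v.2 : ℕ)) ∉ visited := by
  fun_induction search m w fuel s h visited with
  | case1 | case2 | case4 | case6 => exact hv.elim
  | case3 _ _ _ _ _ ih => exact ih hv
  | case5 _ _ _ _ _ _ hnew ih₀ ih₁ =>
    obtain rfl | hv | hv := hv
    · exact hnew
    · exact fun h ↦ ih₀ hv (.inr h)
    · exact fun h ↦ ih₁ hv (.inr h)

lemma readOnce_search (fuel s h : ℕ) (visited : Set (ZMod m × ℕ)) :
    (search m w fuel s h visited).ReadOnce := by
  fun_induction search m w fuel s h visited with
  | case1 | case2 | case4 | case6 => trivial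
  | case3 _ _ _ _ _ ih => exact ih
  | case5 _ _ _ _ _ _ _ ih₀ ih₁ =>
    exact ⟨fun h ↦ notMem_of_mem_support_search h (.inl rfl),
      fun h ↦ notMem_of_mem_support_search h (.inl rfl), ih₀, ih₁⟩

lemma reachesTop_eq_false_of_return {x : ZMod m × Fin w → Bool} {j s : ℕ}
    (hlt : ∀ r ≤ s, walk (env x) 0 r < w) (hj : j < s) (hcol : column m j = column m s)
    (hle : walk (env x) 0 s ≤ walk (env x) 0 j) (parity : j % 2 = s % 2) :
    reachesTop m w x = false := by
  rw [column, column, ZMod.natCast_eq_natCast_iff] at hcol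
  obtain ⟨k, hk⟩ := (Nat.modEq_iff_dvd' (by omega)).1 hcol
  obtain rfl : s = j + 2 * m * k := by
    rw [mul_assoc]
    omega
  exact reachesTop_eq_false.2 <| walk_lt_of_return (env_periodic x k)
    (by simp [mul_assoc]) (by omega) hle hlt

lemma eval_search [NeZero m] {x : ZMod m × Fin w → Bool} {fuel s : ℕ} {visited : Set (ZMod m × ℕ)}
    (hfuel : 2 * m * w < s + fuel) (hlt : ∀ r < s, walk (env x) 0 r < w)
    (hvisited : ∀ v ∈ visited, ∃ j < s, column m j = v.1 ∧ walk (env x) 0 j = v.2) :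
    (search m w fuel s (walk (env x) 0 s) visited).eval x = reachesTop m w x := by
  have hm : 0 < m := NeZero.pos m
  induction fuel generalizing s visited with
  | zero =>
    refine (reachesTop_eq_false.2 <| walk_lt_of_forall_le_mul (c := 2 * m)
      (by simpa using env_periodic x 1) (even_two_mul m) (by omega) fun r hr ↦ ?_).symm
    exact hlt r (by omega)
  | succ fuel ih =>
    have hparity := walk_mod_two (env x) 0
    have hlt' (htop : walk (env x) 0 s < w) (r : ℕ) (hr : r ≤ s) : walk (env x) 0 r < w :=
      hr.lt_or_eq.elim (hlt r) fun hrs ↦ hrs ▸ htop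
    have visited_mono (v) (hv : v ∈ visited) :
        ∃ j < s + 1, column m j = v.1 ∧ walk (env x) 0 j = v.2 := by
      obtain ⟨j, hj, hjv⟩ := hvisited v hv
      exact ⟨j, by omega, hjv⟩
    rw [search]
    split_ifs with htop hzero hlate hold
    · have column_back : column m (s - 2 * m) = column m s := by
        simpa [Nat.sub_add_cancel hlate] using (column_add_mul (m := m) (s - 2 * m) 1).symm
      exact (reachesTop_eq_false_of_return (hlt' htop) (by omega) column_back (by omega)
        (by omega)).symm
    · have ih' := ih (by omega) (fun r hr ↦ hlt' htop r (by omega)) visited_mono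
      rwa [walk, step, if_pos hzero] at ih'
    · obtain ⟨j, hj, hcol, hheight⟩ := hvisited _ hold
      have := hparity j
      have := hparity s
      exact (reachesTop_eq_false_of_return (hlt' htop) hj hcol hheight.ge (by omega)).symm
    · have ih' := ih (visited := insert (column m s, walk (env x) 0 s) visited) (by omega)
        (fun r hr ↦ hlt' htop r (by omega))
        (Set.forall_mem_insert.2 ⟨⟨s, by omega, rfl, rfl⟩, visited_mono⟩)
      rw [walk, step, if_neg hzero, env, dif_pos htop] at ih'
      rw [QueryTree.eval, ← ih']
      split_ifs <;> rfl
    · exact (reachesTop_eq_true.2 ⟨s, not_lt.1 htop⟩).symm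

lemma value_search_le {c : ℕ → ℝ} {d : Bool → ℝ} {Φ : ℕ → ℕ → ℝ}
    (reject : ∀ s h, h ≤ w → d false ≤ Φ s h) (accept : ∀ s, d true ≤ Φ s w)
    (bottom : ∀ s < 2 * m, Φ (s + 1) 1 ≤ Φ s 0)
    (interior : ∀ s h, 0 < h → h < w → c h + (Φ (s + 1) (h - 1) + Φ (s + 1) (h + 1)) / 2 ≤ Φ s h)
    {fuel s h : ℕ} {visited : Set (ZMod m × ℕ)} (hh : h ≤ w) :
    (search m w fuel s h visited).value (fun v ↦ c v.2) d ≤ Φ s h := by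
  fun_induction search m w fuel s h visited with
  | case1 | case2 | case4 => exact reject _ _ hh
  | case3 _ s _ hs hw ih => exact (ih hw).trans (bottom s (not_le.1 hs))
  | case5 _ s h _ hlt hpos _ ih₀ ih₁ =>
    have := ih₀ (by omega)
    have := ih₁ hlt
    have := interior s h (Nat.pos_of_ne_zero hpos) hlt
    rw [QueryTree.value]
    linarith
  | case6 _ s h _ hge =>
    obtain rfl : h = w := by omega
    exact accept s

/-- The potential that bounds the acceptance probability of the search: the square of the height of
a fair walk grows by `1` per step on average, which is used up to time `2 * m`; from then on the
search never leaves `0`, so that the height itself is a martingale until the search stops. -/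
noncomputable def acceptPotential (m w s h : ℕ) : ℝ :=
  if s ≤ 2 * m then 1 / 4 + ((h : ℝ) ^ 2 + 2 * m - s) / w ^ 2 else h / w

lemma div_le_acceptPotential (m : ℕ) {w : ℕ} (hw : 0 < w) (s h : ℕ) :
    (h : ℝ) / w ≤ acceptPotential m w s h := by
  unfold acceptPotential
  split_ifs with hs
  · have hs' : (s : ℝ) ≤ 2 * m := by exact_mod_cast hs
    calc (h : ℝ) / w ≤ 1 / 4 + (h / w) ^ 2 := by linarith [sq_nonneg ((h : ℝ) / w - 1 / 2)]
      _ = 1 / 4 + (h : ℝ) ^ 2 / w ^ 2 := by rw [div_pow]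
      _ ≤ _ := by gcongr; linarith
  · exact le_rfl

lemma acceptPotential_bottom {m s : ℕ} (hs : s < 2 * m) (w : ℕ) :
    acceptPotential m w (s + 1) 1 = acceptPotential m w s 0 := by
  rw [acceptPotential, acceptPotential, if_pos (Nat.succ_le_of_lt hs), if_pos hs.le]
  push_cast
  ring

lemma acceptPotential_interior {h w : ℕ} (hpos : 0 < h) (hlt : h < w) (m s : ℕ) :
    (acceptPotential m w (s + 1) (h - 1) + acceptPotential m w (s + 1) (h + 1)) / 2 ≤
      acceptPotential m w s h := by
  obtain hs | hs := Nat.lt_or_ge s (2 * m)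
  · apply le_of_eq
    have hs' := Nat.succ_le_of_lt hs
    rw [acceptPotential, acceptPotential, acceptPotential, if_pos hs', if_pos hs', if_pos hs.le,
      Nat.cast_pred hpos]
    push_cast
    ring
  · calc _ = (h : ℝ) / w := by
          rw [acceptPotential, acceptPotential, if_neg (by omega), if_neg (by omega),
            Nat.cast_pred hpos]
          push_cast
          ring
      _ ≤ _ := div_le_acceptPotential m (by omega) s h

lemma acceptProb_search_le (hw : 0 < w) (fuel : ℕ) :
    (search m w fuel 0 0 ∅).acceptProb ≤ 1 / 4 + 2 * m / w ^ 2 := by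
  have hw' : (w : ℝ) ≠ 0 := by positivity
  have potential_zero : acceptPotential m w 0 0 = 1 / 4 + 2 * m / w ^ 2 := by
    simp [acceptPotential]
  rw [← potential_zero, QueryTree.acceptProb]
  refine value_search_le (c := 0) (Φ := acceptPotential m w) ?_ ?_
    (fun s hs ↦ (acceptPotential_bottom hs w).le) ?_ hw.le
  · exact fun s h _ ↦ le_trans (by simpa using by positivity) (div_le_acceptPotential m hw s h)
  · exact fun s ↦ le_trans (by simp [hw']) (div_le_acceptPotential m hw s w)
  · exact fun s h hpos hlt ↦ by simpa using acceptPotential_interior hpos hlt m s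

-- The potential is the Green function of the fair walk reflected at `0` and absorbed at `w`.
lemma value_search_row_le {k : ℕ} (hk : k < w) (fuel : ℕ) :
    (search m w fuel 0 0 ∅).value (fun v ↦ if (v.2 : ℕ) = k then 1 else 0) 0 ≤ 2 * w := by
  have le_two_mul : 2 * ((w : ℝ) - (max 0 k : ℕ)) ≤ 2 * w := by simp
  refine le_trans (value_search_le (c := fun h ↦ if h = k then 1 else 0)
    (Φ := fun _ h ↦ 2 * ((w : ℝ) - (max h k : ℕ))) ?_ ?_ ?_ ?_ (Nat.zero_le w)) le_two_mul
  · intro _ h hh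
    have : ((max h k : ℕ) : ℝ) ≤ w := by exact_mod_cast max_le hh hk.le
    simpa using this
  · simp [hk.le]
  · intro _ _
    gcongr
    exact zero_le_one
  · intro _ h hpos _
    obtain hhk | rfl | hhk := lt_trichotomy h k
    · simp [max_eq_right (by omega : h - 1 ≤ k), max_eq_right (by omega : h + 1 ≤ k),
        max_eq_right hhk.le, hhk.ne]
    · rw [max_eq_right (Nat.sub_le h 1), max_eq_left (Nat.le_succ h), max_self, if_pos rfl]
      push_cast
      linarith
    · rw [max_eq_left (by omega : k ≤ h - 1), max_eq_left (by omega : k ≤ h + 1),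
        max_eq_left hhk.le, if_neg hhk.ne', Nat.cast_pred hpos]
      push_cast
      linarith

-- A walk that has just reached height `w` reads a fresh bit there, and climbs to `w + 1` if it is
-- `true`.
lemma half_acceptProb_search_le {fuel s h : ℕ} {visited : Set (ZMod m × ℕ)} (hh : h ≤ w)
    (hw : 0 < w) (hvisited : ∀ v ∈ visited, v.2 < w) :
    (search m w fuel s h visited).acceptProb / 2 ≤
      (search m (w + 1) (fuel + 2) s h visited).acceptProb := by
  fun_induction search m w fuel s h visited with
  | case1 | case2 | case4 =>
    rw [QueryTree.acceptProb_leaf]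
    simpa using QueryTree.acceptProb_nonneg _
  | case3 fuel s visited hs _ ih =>
    rw [search, dif_pos (by omega), if_pos rfl, if_neg hs]
    exact ih hw hvisited
  | case5 fuel s h visited hlt hpos hnew ih₀ ih₁ =>
    have hvisited' : ∀ v ∈ insert (column m s, h) visited, v.2 < w :=
      Set.forall_mem_insert.2 ⟨hlt, hvisited⟩
    rw [search, dif_pos (by omega), if_neg hpos, if_neg hnew, QueryTree.acceptProb_node,
      QueryTree.acceptProb_node]
    linarith [ih₀ (by omega) hvisited', ih₁ (by omega) hvisited']
  | case6 fuel s h visited hge =>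
    have hnew : (column m s, h) ∉ visited := fun hmem ↦ hge (hvisited _ hmem)
    have accepts (visited') :
        search m (w + 1) (fuel + 2) (s + 1) (h + 1) visited' = .leaf true := by
      rw [search, dif_neg (by omega)]
    rw [search, dif_pos (by omega), if_neg (by omega), if_neg hnew, QueryTree.acceptProb_node,
      accepts, QueryTree.acceptProb_leaf, QueryTree.acceptProb_leaf, if_pos rfl]
    linarith [QueryTree.acceptProb_nonneg (search m (w + 1) (fuel + 2) (s + 1) (h - 1)
      (insert (column m s, h) visited))]

section CrossingProbability

variable [NeZero m]

lemma eval_search_zero {fuel : ℕ} (hfuel : 2 * m * w < fuel) :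
    (search m w fuel 0 0 ∅).eval = reachesTop m w :=
  funext fun x ↦ eval_search (x := x) (by omega) (by simp) (by simp)

lemma prob_reachesTop {fuel : ℕ} (hfuel : 2 * m * w < fuel) :
    prob (reachesTop m w · = true) = (search m w fuel 0 0 ∅).acceptProb := by
  rw [← eval_search_zero hfuel, QueryTree.prob_eval_eq_acceptProb (readOnce_search _ _ _ _)]

lemma prob_reachesTop_le (hw : 0 < w) :
    prob (reachesTop m w · = true) ≤ 1 / 4 + 2 * m / w ^ 2 :=
  (prob_reachesTop (Nat.lt_succ_self _)).trans_le (acceptProb_search_le hw _)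

lemma half_prob_reachesTop_le (hw : 0 < w) :
    prob (reachesTop m w · = true) / 2 ≤ prob (reachesTop m (w + 1) · = true) := by
  have hm : 0 < m := NeZero.pos m
  rw [prob_reachesTop (fuel := 2 * m * (w + 1)) (by gcongr; omega),
    prob_reachesTop (fuel := 2 * m * (w + 1) + 2) (by omega)]
  exact half_acceptProb_search_le (Nat.zero_le w) hw (by simp)

lemma prob_reachesTop_eq_one (hw : w ≤ 1) : prob (reachesTop m w · = true) = 1 := by
  have reaches (x) : reachesTop m w x = true := reachesTop_eq_true.2 ⟨1, hw⟩
  simp [reaches, prob_const]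

lemma exists_prob_reachesTop_mem_Icc (m : ℕ) [NeZero m] :
    ∃ w, 0 < w ∧ w ^ 2 ≤ 16 * m ∧ prob (reachesTop m w · = true) ∈ Set.Icc (1 / 4) (1 / 2) := by
  have hm : 0 < m := NeZero.pos m
  have small (w : ℕ) (hw : 8 * m < w ^ 2) : prob (reachesTop m w · = true) < 1 / 2 := by
    have hw₀ : 0 < w := Nat.pos_of_ne_zero (by rintro rfl; simp at hw)
    have hw' : (8 : ℝ) * m < w ^ 2 := by exact_mod_cast hw
    have : 2 * (m : ℝ) / w ^ 2 < 1 / 4 := by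
      rw [div_lt_iff₀ (by positivity)]
      linarith
    linarith [prob_reachesTop_le (m := m) hw₀]
  have exists_small : ∃ w, prob (reachesTop m w · = true) < 1 / 2 :=
    ⟨8 * m + 1, small _ (by nlinarith)⟩
  classical
  obtain ⟨w, hw, hmin⟩ := Nat.findX exists_small
  have two_le : 2 ≤ w := by
    by_contra! hlt
    rw [prob_reachesTop_eq_one (by omega)] at hw
    norm_num at hw
  obtain ⟨v, rfl⟩ := Nat.exists_eq_add_of_le' (one_le_two.trans two_le)
  have hv : v ^ 2 ≤ 8 * m := not_lt.1 fun h ↦ hmin v v.lt_succ_self (small v h)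
  refine ⟨v + 1, v.succ_pos, ?_, ?_, hw.le⟩
  · zify at hv hm ⊢
    linarith [sq_nonneg ((v : ℤ) - 2)]
  · linarith [half_prob_reachesTop_le (m := m) (show 0 < v by omega), hmin v v.lt_succ_self]

lemma sum_prob_mem_reads_search_le (k : Fin w) (fuel : ℕ) :
    ∑ c : ZMod m, prob (fun x ↦ (c, k) ∈ (search m w fuel 0 0 ∅).reads x) ≤ 2 * w := by
  refine le_trans (le_of_eq ?_) (value_search_row_le (m := m) k.isLt fuel)
  rw [← QueryTree.sum_mul_prob_mem_reads (readOnce_search _ _ _ _), Fintype.sum_prod_type]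
  simp [Fin.val_inj]

lemma evaluableWithin_reachesTop (m w : ℕ) [NeZero m] :
    EvaluableWithin (reachesTop m w) (2 * w / m) := by
  set t := search m w (2 * m * w + 1) 0 0 ∅
  have eval_t : t.eval = reachesTop m w := eval_search_zero (Nat.lt_succ_self _)
  rw [← eval_t]
  refine .of_symmetries (rotate m w) (fun a x ↦ ?_) fun ⟨c, k⟩ ↦ ?_
  · rw [eval_t, reachesTop_comp_rotate]
  have sum_columns : ∑ a, prob (fun x ↦ (rotate m w a).symm (c, k) ∈ t.reads x) =
      ∑ c', prob fun x ↦ (c', k) ∈ t.reads x :=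
    Fintype.sum_equiv (Equiv.subLeft c) _ _ fun a ↦ by simp [rotate, sub_eq_add_neg]
  rw [Fintype.expect_eq_sum_div_card, ZMod.card, sum_columns]
  gcongr
  exact sum_prob_mem_reads_search_le k _

end CrossingProbability

end Crossing

section Recursion

lemma Admissible.exists_extension {n : ℕ} {b : (Fin n → Bool) → Bool} {a δ : ℝ}
    (hb : Admissible b δ) (hδ : 0 ≤ δ) {m : ℕ} [NeZero m] (ha : 0 < a) (hm : (m : ℝ) = a ^ 2)
    (h : 5 / 8 * δ ≤ 8 / a) :
    ∃ w : ℕ, 0 < w ∧ (w : ℝ) ≤ 4 * a ∧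
      ∃ f : (Fin (2 * (m * w) + n) → Bool) → Bool, Admissible f (8 / a) := by
  obtain ⟨w, hw, hwm, hp⟩ := exists_prob_reachesTop_mem_Icc m
  have hwa : (w : ℝ) ≤ 4 * a := by
    refine le_of_sq_le_sq ?_ (by positivity)
    rw [mul_pow, ← hm]
    exact_mod_cast hwm.trans_eq (by norm_num)
  have evaluable : EvaluableWithin (reachesTop m w) (8 / a) := by
    refine (evaluableWithin_reachesTop m w).mono ?_
    rw [hm, div_le_div_iff₀ (by positivity) ha]
    linarith [mul_le_mul_of_nonneg_right hwa ha.le]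
  have differ_le {p : ℝ} (hp : p ∈ Set.Icc (1 / 4) (1 / 2)) : p ^ 2 + (1 - p) ^ 2 ≤ 5 / 8 := by
    nlinarith [hp.1, hp.2]
  have admissible := Admissible.majority_dual monotone_reachesTop evaluable rfl hb
    ((mul_le_mul_of_nonneg_right (differ_le hp) hδ).trans h)
  refine ⟨w, hw, hwa, _, admissible.reindex (Fintype.equivFinOfCardEq ?_)⟩
  simp [two_mul]

lemma exists_admissible (k : ℕ) :
    ∃ (n : ℕ) (f : (Fin n → Bool) → Bool), Admissible f (8 / √2 ^ k) ∧ 2 ^ k ≤ n ∧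
      (n : ℝ) ≤ 16 * (√2 ^ k) ^ 3 := by
  have sqrt_sq : √2 ^ 2 = 2 := Real.sq_sqrt zero_le_two
  have sqrt_gt : 1.4 < √2 := Real.lt_sqrt_of_sq_lt (by norm_num)
  have sqrt_lt : √2 < 1.5 := (Real.sqrt_lt' (by norm_num)).2 (by norm_num)
  induction k with
  | zero => exact ⟨1, _, (Admissible.coord 0).mono (by norm_num), by norm_num, by norm_num⟩
  | succ k ih =>
    obtain ⟨n, b, hb, -, hn⟩ := ih
    have ha : 0 < √2 ^ k := by positivity
    have card_columns : ((2 ^ (k + 1) : ℕ) : ℝ) = (√2 ^ (k + 1)) ^ 2 := by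
      rw [← pow_mul, mul_comm, pow_mul, sqrt_sq, Nat.cast_pow, Nat.cast_ofNat]
    have revealment : 5 / 8 * (8 / √2 ^ k) ≤ 8 / √2 ^ (k + 1) := by
      rw [mul_div_assoc', pow_succ, div_le_div_iff₀ ha (by positivity)]
      nlinarith
    obtain ⟨w, hw, hwa, f, hf⟩ := hb.exists_extension (by positivity) (by positivity)
      card_columns revealment
    refine ⟨_, f, hf, ?_, ?_⟩
    · have := Nat.le_mul_of_pos_right (2 ^ (k + 1)) hw
      omega
    · have grows : 2 * (√2 ^ k) ^ 3 ≤ (√2 ^ (k + 1)) ^ 3 := by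
        have : 2 ≤ √2 ^ 3 := by nlinarith
        rw [pow_succ √2 k, mul_pow, mul_comm]
        gcongr
      have cylinder : (√2 ^ (k + 1)) ^ 2 * w ≤ (√2 ^ (k + 1)) ^ 2 * (4 * √2 ^ (k + 1)) := by
        gcongr
      rw [Nat.cast_add, Nat.cast_mul, Nat.cast_mul, card_columns, Nat.cast_ofNat]
      linarith

end Recursion

lemma one_le_log_of_three_le {x : ℝ} (hx : 3 ≤ x) : 1 ≤ Real.log x :=
  (Real.le_log_iff_exp_le (by positivity)).2 (Real.exp_one_lt_three.le.trans hx)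

end LowRevealment

theorem statement2_general :
    ∃ C > (0 : ℝ), ∀ N : ℕ, ∃ n, N ≤ n ∧ 0 < n ∧
      ∃ (f : (Fin n → Bool) → Bool) (A : RandAlg n),
        balanced f ∧
        monotoneBF f ∧
        (∀ r x, (A.tree r).eval x = f x) ∧
        (∀ i, readProb A i ≤ C / (n : ℝ) ^ ((1 : ℝ) / 3)) := by
  refine ⟨24, by norm_num, fun N ↦ ?_⟩
  obtain ⟨n, f, hf, hle, hn⟩ := LowRevealment.exists_admissible N
  have hN : N < n := Nat.lt_two_pow_self.trans_le hle
  obtain ⟨hbalanced, hmonotone, A, heval, hread⟩ := hf.exists_randAlg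
  refine ⟨n, hN.le, by omega, f, A, hbalanced, hmonotone, heval, fun i ↦ (hread i).trans ?_⟩
  have hn₀ : (0 : ℝ) < n := by exact_mod_cast (Nat.zero_le N).trans_lt hN
  have cube_root_le : (n : ℝ) ^ ((1 : ℝ) / 3) ≤ 3 * √2 ^ N := by
    rw [one_div, Real.rpow_inv_le_iff_of_pos hn₀.le (by positivity) (by norm_num)]
    calc (n : ℝ) ≤ 16 * (√2 ^ N) ^ 3 := hn
      _ ≤ (3 * √2 ^ N) ^ (3 : ℝ) := by
        rw [Real.rpow_ofNat, mul_pow]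
        gcongr
        norm_num
  rw [div_le_div_iff₀ (by positivity) (by positivity)]
  linarith

/-- There exist a constant `C > 0` and infinitely many positive
integers `n` for which there is a balanced monotone Boolean function on `n` bits
together with a randomized decision-tree algorithm that on every input outputs
`f x` with probability 1, and whose revealment satisfies
`δ = max_i δ_i ≤ C · n^(-1/3) · log n`. -/
theorem statement2 :
    ∃ C > (0 : ℝ), ∀ N : ℕ, ∃ n, N ≤ n ∧ 0 < n ∧
      ∃ (f : (Fin n → Bool) → Bool) (A : RandAlg n),
        balanced f ∧
        monotoneBF f ∧
        (∀ r x, (A.tree r).eval x = f x) ∧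
        (∀ i, readProb A i ≤ C * Real.log n / (n : ℝ) ^ ((1 : ℝ) / 3)) := by
  obtain ⟨C, hC, h⟩ := statement2_general
  refine ⟨C, hC, fun N ↦ ?_⟩
  obtain ⟨n, hN, hn, f, A, hbalanced, hmonotone, heval, hread⟩ := h (max N 3)
  have one_le_log : 1 ≤ Real.log n :=
    LowRevealment.one_le_log_of_three_le (by exact_mod_cast (le_max_right N 3).trans hN)
  refine ⟨n, (le_max_left N 3).trans hN, hn, f, A, hbalanced, hmonotone, heval, fun i ↦ ?_⟩
  refine (hread i).trans (div_le_div_of_nonneg_right ?_ (by positivity))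
  exact le_mul_of_one_le_right hC.le one_le_log
end
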